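/- arXiv:1703.03287 — 6 statements merged into one kernel-verified Lean document; each statement's English description precedes it below -/
import Mathlib

section
/- Let $T_r$ be the operator $T_r f(x) = \int_{\mathbb{R}^n} |x - A_1 y|^{-n_1+\alpha_1} \cdots |x - A_m y|^{-n_m+\alpha_m} f(y)\,dy$ under the stated hypotheses on the matrices $A_1,\dots,A_m$, with $0 < r < 1$. For every $0 < p \le 1$ with $\frac{1}{q} = \frac{1}{p} - r$, there exists a constant $C > 0$, independent of the atom, such that $\|T_r a\|_{L^q(\mathbb{R}^n)} \le C$ for every $p$-atom $a$. -/
/-!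
The kernel of `T_r` is `∏ ‖x - A i y‖ ^ (-s i)` with `s i = (1 - r) * n i`, so that
`0 < s i < n i = rank (A i)` and `∑ s i = n (1 - r)`. An atom `a` on `B(z, δ)` satisfies
`|a| ≤ κ δ ^ (-n/p)`. Let `D` be the distance from `x` to the nearest of the points `A k z`.

* If `D` is at most a multiple of `δ`, only the size of `a` is used. Since `m > 1` and the sum of the
  subspaces `⋂_{j ≠ i} ker A j` is direct, the kernels of all `A i` meet only in `0`; as the ranks
  add up to `n`, the map `y ↦ (A i y)ᵢ` is a linear isomorphism onto the product of the ranges. In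
  these coordinates the kernel is a product of locally integrable functions, and its integral over
  `B(z, δ)` is `O(δ ^ (n r))`, uniformly in `x` (`near_bound`).
* If `D` is larger, the kernel is approximated on `B(z, δ)` by a polynomial of degree `< N` with
  error `O(D ^ (-n(1-r)) * (δ/D) ^ N)`, where `N = ⌊n(1/p - 1)⌋ + 1` (`far_approx`). The moments of `a`
  annihilate the polynomial.

Instead of derivatives of the kernel, the approximation uses the class `PolyApprox`, which is closed
under sums and products, so that only the binomial series of `(1 + t) ^ (-s/2)` is needed.

Together, `|T_r a (x)| ≤ C δ ^ (n r - n/p) (1 + D/δ) ^ (-n(1-r) - N)` (`pointwise_bound`). The `q`-th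
power of the right side is integrable because `N > n(1/p - 1)`, and the powers of `δ` in its `L^q`
norm cancel because `1/q = 1/p - r` (`eLpNorm_bound`).
-/

open MeasureTheory Matrix

/-- A `p`-atom (`0 < p ≤ 1`): a measurable function supported on a ball `B = B(z, δ)` with
`‖a‖_∞ ≤ |B|^{-1/p}` and vanishing moments up to order `⌊n(p⁻¹ - 1)⌋`. -/
def IsPAtom (n : ℕ) (p : ℝ) (z : EuclideanSpace ℝ (Fin n)) (δ : ℝ)
    (a : EuclideanSpace ℝ (Fin n) → ℝ) : Prop :=
  0 < δ ∧ Measurable a ∧ Function.support a ⊆ Metric.ball z δ ∧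
    eLpNorm a ⊤ volume ≤ (volume (Metric.ball z δ)) ^ (-(1 / p)) ∧
    ∀ β : Fin n → ℕ, (∑ i, β i) ≤ ⌊(n : ℝ) * (p⁻¹ - 1)⌋₊ →
      ∫ y, (∏ i, y i ^ β i) * a y = 0

/-! ### Local integrability of the kernel -/

/-- Tonelli for a product of functions of separate coordinates: the lower-integral counterpart of
`integral_fin_nat_prod_eq_prod`. -/
theorem lintegral_pi_prod {n : ℕ} {E : Fin n → Type*}
    {mE : ∀ i, MeasurableSpace (E i)} {μ : (i : Fin n) → Measure (E i)} [∀ i, SigmaFinite (μ i)]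
    (f : (i : Fin n) → E i → ENNReal) (hf : ∀ i, Measurable (f i)) :
    ∫⁻ x : (i : Fin n) → E i, ∏ i, f i (x i) ∂(Measure.pi μ) = ∏ i, ∫⁻ x, f i x ∂(μ i) := by
  induction n with
  | zero => simp
  | succ n n_ih =>
      calc
        _ = ∫⁻ x : E 0 × ((i : Fin n) → E (Fin.succ i)),
            f 0 x.1 * ∏ i : Fin n, f (Fin.succ i) (x.2 i)
            ∂((μ 0).prod (Measure.pi (fun i ↦ μ i.succ))) := by
          rw [← ((measurePreserving_piFinSuccAbove μ 0).symm).lintegral_comp_emb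
            (MeasurableEquiv.measurableEmbedding _)]
          refine lintegral_congr fun x => ?_
          rw [Fin.prod_univ_succ]
          rfl
        _ = (∫⁻ x, f 0 x ∂μ 0)
            * ∏ i : Fin n, ∫⁻ (x : E (Fin.succ i)), f (Fin.succ i) x ∂(μ i.succ) := by
          rw [← n_ih _ (fun i => hf _)]
          refine lintegral_prod_mul (f := f 0)
            (g := fun y : (i : Fin n) → E (Fin.succ i) => ∏ i : Fin n, f (Fin.succ i) (y i)) (hf 0).aemeasurable ?_
          exact (Finset.measurable_prod _ fun i _ => (hf _).comp (measurable_pi_apply i)).aemeasurable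
        _ = ∏ i, ∫⁻ x, f i x ∂(μ i) := by rw [Fin.prod_univ_succ]

theorem lintegral_enorm_rpow_ball_lt_top {W : Type*} [NormedAddCommGroup W] [NormedSpace ℝ W]
    [FiniteDimensional ℝ W] [Nontrivial W] [MeasurableSpace W] [BorelSpace W]
    (μ : Measure W) [μ.IsAddHaarMeasure] {s : ℝ} (hs : s < Module.finrank ℝ W) :
    ∫⁻ w in Metric.ball (0 : W) 1, ‖w‖ₑ ^ (-s) ∂μ < ⊤ := by
  have hd : 0 < Module.finrank ℝ W := Module.finrank_pos
  have h := (integrableOn_fun_norm_addHaar (E := W) μ (f := fun t : ℝ => t ^ (-s)) (r := 1)).2 (by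
    have := (intervalIntegral.integrableOn_Ioo_rpow_iff (s := (Module.finrank ℝ W : ℝ) - 1 - s) zero_lt_one).2 (by linarith)
    refine this.congr_fun (fun y hy => ?_) measurableSet_Ioo
    simp only [smul_eq_mul]
    rw [← Real.rpow_natCast, ← Real.rpow_add hy.1, Nat.cast_sub hd]
    simp [sub_eq_add_neg])
  have h2 := h.setLIntegral_lt_top
  refine lt_of_le_of_lt (le_of_eq ?_) h2
  refine setLIntegral_congr_fun_ae measurableSet_ball ?_
  filter_upwards [(measure_eq_zero_iff_ae_notMem (s := {(0:W)})).1 (measure_singleton (μ := μ) 0)] with w hw _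
  rw [← ENNReal.ofReal_rpow_of_pos (norm_pos_iff.2 hw), ofReal_norm]

/-- The singular integral over a ball is bounded uniformly in the position `x` of the singularity:
where `‖x - w‖ ≥ 1` the kernel is at most `1`, and the rest is a translate of the unit ball. -/
theorem lintegral_ball_shift_le {W : Type*} [NormedAddCommGroup W] [NormedSpace ℝ W]
    [FiniteDimensional ℝ W] [MeasurableSpace W] [BorelSpace W]
    (μ : Measure W) [μ.IsAddHaarMeasure] {s : ℝ} (hs : 0 < s) (M : ℝ) (x : W) :
    ∫⁻ w in Metric.ball (0 : W) M, ‖x - w‖ₑ ^ (-s) ∂μ ≤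
      (∫⁻ w in Metric.ball (0 : W) 1, ‖w‖ₑ ^ (-s) ∂μ) + μ (Metric.ball (0 : W) M) := by
  have h1 : ∀ w ∈ Metric.ball (0:W) M, ‖x - w‖ₑ ^ (-s) ≤
     (Metric.ball (0 : W) 1).indicator (fun w => ‖w‖ₑ ^ (-s)) (x - w) + 1 := by
    intro w _
    by_cases hxw : x - w ∈ Metric.ball (0:W) 1
    · rw [Set.indicator_of_mem hxw]; exact le_self_add
    · rw [Set.indicator_of_notMem hxw, zero_add]
      rw [ENNReal.rpow_neg, ENNReal.inv_le_one]
      refine ENNReal.one_le_rpow ?_ hs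
      rw [mem_ball_zero_iff, not_lt] at hxw
      rw [← ofReal_norm]
      exact ENNReal.one_le_ofReal.2 hxw
  have hm : Measurable ((Metric.ball (0 : W) 1).indicator (fun w => ‖w‖ₑ ^ (-s))) :=
    Measurable.indicator (by fun_prop) measurableSet_ball
  refine (setLIntegral_mono (by fun_prop) h1).trans ?_
  rw [lintegral_add_right _ measurable_const]
  refine add_le_add ?_ ?_
  · refine (setLIntegral_le_lintegral _ _).trans ?_
    rw [lintegral_sub_left_eq_self (μ := μ) ((Metric.ball (0 : W) 1).indicator (fun w => ‖w‖ₑ ^ (-s)) ) x,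
      lintegral_indicator measurableSet_ball]
  · exact (setLIntegral_one _).le

/-- Local integrability of the kernel, uniformly in the centres `x i`. As the ranks add up to `dim E`
and the kernels meet only in `0`, the map `y ↦ (L i y)ᵢ` is a linear isomorphism of `E` onto
`∏ range (L i)`; projecting `x i` orthogonally onto `range (L i)` only increases the kernel, and the
integral splits into a product of integrals of `‖w‖ ^ (-s i)` with `s i < dim range (L i)`. -/
theorem near_unit {E : Type*} [NormedAddCommGroup E] [InnerProductSpace ℝ E]
    [FiniteDimensional ℝ E] [MeasurableSpace E] [BorelSpace E]
    (μ : Measure E) [μ.IsAddHaarMeasure] {m : ℕ} (L : Fin m → E →ₗ[ℝ] E) (s : Fin m → ℝ)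
    (hs0 : ∀ i, 0 < s i) (hs : ∀ i, s i < Module.finrank ℝ (LinearMap.range (L i)))
    (hsum : ∑ i, Module.finrank ℝ (LinearMap.range (L i)) = Module.finrank ℝ E)
    (hker : ∀ y, (∀ i, L i y = 0) → y = 0) :
    ∃ C : ENNReal, C < ⊤ ∧ ∀ x : Fin m → E,
      ∫⁻ y in Metric.ball (0 : E) 1, ∏ i, ‖x i - L i y‖ₑ ^ (-(s i)) ∂μ ≤ C := by
  classical
  let W : Fin m → Submodule ℝ E := fun i => LinearMap.range (L i)
  have hnt : ∀ i, Nontrivial (W i) := fun i => Module.finrank_pos_iff (R := ℝ).1 (by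
    have := (hs0 i).trans (hs i)
    exact_mod_cast this)
  let Φ₀ : E →ₗ[ℝ] (∀ i, W i) := LinearMap.pi fun i => (L i).rangeRestrict
  have hinj : Function.Injective Φ₀ := by
    rw [← LinearMap.ker_eq_bot, LinearMap.ker_eq_bot']
    intro y hy
    refine hker y fun i => ?_
    have := congrFun hy i
    simpa [Φ₀] using congrArg Subtype.val this
  let Φ : E ≃L[ℝ] (∀ i, W i) := (LinearEquiv.ofInjectiveOfFinrankEq Φ₀ hinj (by
    rw [Module.finrank_pi_fintype]; exact hsum.symm)).toContinuousLinearEquiv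
  have hΦ : ∀ y i, ((Φ y i : W i) : E) = L i y := fun y i => rfl
  let ν : Measure (∀ i, W i) := Measure.pi fun i => (Measure.addHaar : Measure (W i))
  have hmap := Measure.isAddLeftInvariant_eq_smul (μ.map Φ) ν
  set c := Measure.addHaarScalarFactor (μ.map Φ) ν
  -- a common bound for `‖L i y‖` on the unit ball
  obtain ⟨M, hM⟩ : ∃ M : ℝ, ∀ i, ∀ y ∈ Metric.ball (0 : E) 1, ‖L i y‖ < M := by
    refine ⟨∑ i, ‖LinearMap.toContinuousLinearMap (L i)‖ + 1, fun i y hy => ?_⟩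
    have h1 := (LinearMap.toContinuousLinearMap (L i)).le_opNorm y
    have h2 : ‖LinearMap.toContinuousLinearMap (L i)‖ ≤ ∑ i, ‖LinearMap.toContinuousLinearMap (L i)‖ :=
      Finset.single_le_sum (f := fun i => ‖LinearMap.toContinuousLinearMap (L i)‖) (fun _ _ => norm_nonneg _) (Finset.mem_univ i)
    rw [mem_ball_zero_iff] at hy
    have h3 := mul_le_of_le_one_right (norm_nonneg (LinearMap.toContinuousLinearMap (L i))) hy.le
    simp only [LinearMap.coe_toContinuousLinearMap'] at h1
    linarith
  refine ⟨c * ∏ i, ((∫⁻ w in Metric.ball (0 : W i) 1, ‖w‖ₑ ^ (-(s i)) ∂Measure.addHaar) +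
    Measure.addHaar (Metric.ball (0 : W i) M)), ?_, fun x => ?_⟩
  · refine ENNReal.mul_lt_top ENNReal.coe_lt_top (ENNReal.prod_lt_top fun i _ => ?_)
    exact ENNReal.add_lt_top.2 ⟨lintegral_enorm_rpow_ball_lt_top _ (hs i), measure_ball_lt_top⟩
  let g : ∀ i, W i → ENNReal := fun i => (Metric.ball (0 : W i) M).indicator
    fun w => ‖(W i).orthogonalProjectionOnto (x i) - w‖ₑ ^ (-(s i))
  have hg : ∀ i, Measurable (g i) := fun i => Measurable.indicator (by fun_prop) measurableSet_ball
  calc ∫⁻ y in Metric.ball (0 : E) 1, ∏ i, ‖x i - L i y‖ₑ ^ (-(s i)) ∂μ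
      ≤ ∫⁻ y in Metric.ball (0 : E) 1, ∏ i, g i (Φ y i) ∂μ := by
        refine setLIntegral_mono' measurableSet_ball fun y hy => ?_
        refine Finset.prod_le_prod' fun i _ => ?_
        have hmem : Φ y i ∈ Metric.ball (0 : W i) M := by
          rw [mem_ball_zero_iff]; exact hM i y hy
        simp only [g, Set.indicator_of_mem hmem]
        rw [ENNReal.rpow_neg, ENNReal.rpow_neg, ENNReal.inv_le_inv]
        refine ENNReal.rpow_le_rpow ?_ (hs0 i).le
        have : (W i).orthogonalProjectionOnto (x i) - Φ y i
            = (W i).orthogonalProjectionOnto (x i - L i y) := by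
          rw [map_sub, ← hΦ, Submodule.orthogonalProjectionOnto_mem_subspace_eq_self]
        rw [this, ← ofReal_norm, ← ofReal_norm]
        exact ENNReal.ofReal_le_ofReal ((W i).norm_orthogonalProjectionOnto_apply_le _)
    _ ≤ ∫⁻ y, ∏ i, g i (Φ y i) ∂μ := setLIntegral_le_lintegral _ _
    _ = ∫⁻ w, ∏ i, g i (w i) ∂(μ.map Φ) := by
        rw [lintegral_map _ Φ.continuous.measurable]
        exact Finset.measurable_prod _ fun i _ => (hg i).comp (measurable_pi_apply i)
    _ = c * ∏ i, ∫⁻ w, g i w ∂Measure.addHaar := by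
        rw [hmap, lintegral_smul_measure, lintegral_pi_prod _ hg]; rfl
    _ ≤ _ := by
        gcongr with i
        simp only [g]
        rw [lintegral_indicator measurableSet_ball]
        exact lintegral_ball_shift_le _ (hs0 i) _ _

/-- Change of variables under the dilation by `δ`. -/
theorem lintegral_scale {E : Type*} [NormedAddCommGroup E] [NormedSpace ℝ E]
    [FiniteDimensional ℝ E] [MeasurableSpace E] [BorelSpace E]
    (μ : Measure E) [μ.IsAddHaarMeasure] {F : E → ENNReal} (hF : Measurable F)
    {δ : ℝ} (hδ : 0 < δ) :
    ∫⁻ y, F y ∂μ = ENNReal.ofReal (δ ^ Module.finrank ℝ E) * ∫⁻ y, F (δ • y) ∂μ := by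
  rw [← lintegral_map hF (measurable_const_smul δ), Measure.map_addHaar_smul μ hδ.ne',
    lintegral_smul_measure, smul_eq_mul, ← mul_assoc, ← ENNReal.ofReal_mul (by positivity),
    abs_of_pos (by positivity), mul_inv_cancel₀ (by positivity), ENNReal.ofReal_one, one_mul]

/-- The bound of `near_unit` on a ball of radius `δ`, by translation and dilation. -/
theorem near_bound {E : Type*} [NormedAddCommGroup E] [InnerProductSpace ℝ E]
    [FiniteDimensional ℝ E] [MeasurableSpace E] [BorelSpace E]
    (μ : Measure E) [μ.IsAddHaarMeasure] {m : ℕ} (L : Fin m → E →ₗ[ℝ] E) (s : Fin m → ℝ)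
    (hs0 : ∀ i, 0 < s i) (hs : ∀ i, s i < Module.finrank ℝ (LinearMap.range (L i)))
    (hsum : ∑ i, Module.finrank ℝ (LinearMap.range (L i)) = Module.finrank ℝ E)
    (hker : ∀ y, (∀ i, L i y = 0) → y = 0) :
    ∃ C : ℝ, 0 < C ∧ ∀ (x z : E) (δ : ℝ), 0 < δ →
      ∫⁻ y in Metric.ball z δ, ∏ i, ‖x - L i y‖ₑ ^ (-(s i)) ∂μ ≤
        ENNReal.ofReal (C * δ ^ (Module.finrank ℝ E - ∑ i, s i)) := by
  obtain ⟨C, hC, h⟩ := near_unit μ L s hs0 hs hsum hker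
  refine ⟨C.toReal + 1, by positivity, fun x z δ hδ => ?_⟩
  have h1 : ∫⁻ y in Metric.ball z δ, ∏ i, ‖x - L i y‖ₑ ^ (-(s i)) ∂μ
     = ∫⁻ y, (Metric.ball z δ).indicator (fun y => ∏ i, ‖x - L i y‖ₑ ^ (-(s i))) (z + y) ∂μ := by
    rw [lintegral_add_left_eq_self (μ := μ), lintegral_indicator measurableSet_ball]
  set F : E → ENNReal := fun y => (Metric.ball z δ).indicator (fun y => ∏ i, ‖x - L i y‖ₑ ^ (-(s i))) (z + y) with hF
  have hFm : Measurable F := by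
    have : Measurable (fun y => ∏ i, ‖x - L i y‖ₑ ^ (-(s i))) := by
      refine Finset.measurable_prod _ fun i _ => ?_
      have := (LinearMap.toContinuousLinearMap (L i)).continuous.measurable
      simp only [LinearMap.coe_toContinuousLinearMap'] at this
      fun_prop
    exact (this.indicator measurableSet_ball).comp (measurable_const_add z)
  have h2 : ∫⁻ y, F y ∂μ = ENNReal.ofReal (δ ^ Module.finrank ℝ E) * ∫⁻ y, F (δ • y) ∂μ :=
    lintegral_scale μ hFm hδ
  have h3 : ∫⁻ y, F (δ • y) ∂μ ≤ ENNReal.ofReal (δ ^ (-∑ i, s i)) * C := by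
    have : ∀ y, F (δ • y) = (Metric.ball (0 : E) 1).indicator
        (fun y => ENNReal.ofReal (δ ^ (-∑ i, s i)) * ∏ i, ‖δ⁻¹ • (x - L i z) - L i y‖ₑ ^ (-(s i))) y := by
      intro y
      simp only [hF]
      have hiff : z + δ • y ∈ Metric.ball z δ ↔ y ∈ Metric.ball (0 : E) 1 := by
        rw [mem_ball_iff_norm, mem_ball_zero_iff, add_sub_cancel_left, norm_smul, Real.norm_eq_abs,
          abs_of_pos hδ]
        constructor <;> intro h <;> nlinarith
      by_cases hy : y ∈ Metric.ball (0 : E) 1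
      · rw [Set.indicator_of_mem hy, Set.indicator_of_mem (hiff.2 hy), ← Finset.sum_neg_distrib,
          Real.rpow_sum_of_pos hδ, ENNReal.ofReal_prod_of_nonneg (fun _ _ => by positivity),
          ← Finset.prod_mul_distrib]
        refine Finset.prod_congr rfl fun i _ => ?_
        have : x - L i (z + δ • y) = δ • (δ⁻¹ • (x - L i z) - L i y) := by
          rw [smul_sub, smul_inv_smul₀ hδ.ne', map_add, map_smul]; abel
        rw [this, enorm_smul, ENNReal.mul_rpow_of_ne_top, ← ENNReal.ofReal_rpow_of_pos hδ,
          Real.enorm_of_nonneg hδ.le]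
        · simp
        · simp
      · rw [Set.indicator_of_notMem hy, Set.indicator_of_notMem (fun h => hy (hiff.1 h))]
    simp_rw [this]
    rw [lintegral_indicator measurableSet_ball, lintegral_const_mul' _ _ ENNReal.ofReal_ne_top]
    gcongr
    exact h _
  rw [h1, h2]
  calc _ ≤ ENNReal.ofReal (δ ^ Module.finrank ℝ E) * (ENNReal.ofReal (δ ^ (-∑ i, s i)) * C) := by gcongr
    _ = ENNReal.ofReal (C.toReal * δ ^ (Module.finrank ℝ E - ∑ i, s i)) := by
      rw [sub_eq_add_neg, Real.rpow_add hδ, Real.rpow_natCast, ENNReal.ofReal_mul (by positivity), ENNReal.ofReal_mul (by positivity), ENNReal.ofReal_toReal hC.ne]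
      ring
    _ ≤ _ := by
      apply ENNReal.ofReal_le_ofReal
      have : 0 < δ ^ (Module.finrank ℝ E - ∑ i, s i) := by positivity
      nlinarith

/-! ### Polynomials and polynomial approximation -/

/-- The functions on `ℝⁿ` given by polynomials of total degree `< d`, spanned by the monomials.
The strict inequality makes `polyLT n 0 = 0`. -/
def polyLT (n d : ℕ) : Submodule ℝ (EuclideanSpace ℝ (Fin n) → ℝ) :=
  Submodule.span ℝ {f | ∃ β : Fin n → ℕ, ∑ i, β i < d ∧ f = fun y => ∏ i, y i ^ β i}

theorem polyLT_mono {n a b : ℕ} (h : a ≤ b) : polyLT n a ≤ polyLT n b :=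
  Submodule.span_mono fun _ ⟨β, hβ, hf⟩ => ⟨β, hβ.trans_le h, hf⟩

/-- Degrees `≤ a` and `< b` give a product of degree `< a + b`. -/
theorem polyLT_mul {n a b : ℕ} {f g : EuclideanSpace ℝ (Fin n) → ℝ}
    (hf : f ∈ polyLT n (a + 1)) (hg : g ∈ polyLT n b) : f * g ∈ polyLT n (a + b) := by
  have h := Submodule.mul_mem_mul hf hg
  rw [polyLT, polyLT, Submodule.span_mul_span] at h
  refine Submodule.span_mono ?_ h
  rintro _ ⟨_, ⟨β, hβ, rfl⟩, _, ⟨γ, hγ, rfl⟩, rfl⟩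
  refine ⟨β + γ, ?_, ?_⟩
  · simp only [Pi.add_apply, Finset.sum_add_distrib]; omega
  · funext y
    simp [pow_add, Finset.prod_mul_distrib]

theorem polyLT_const {n : ℕ} (c : ℝ) : (fun _ => c) ∈ polyLT n 1 := by
  have : (fun _ : EuclideanSpace ℝ (Fin n) => c) = c • fun y => ∏ i, y i ^ (0 : Fin n → ℕ) i := by
    funext y; simp
  rw [this]
  exact Submodule.smul_mem _ _ (Submodule.subset_span ⟨0, by simp, rfl⟩)

theorem polyLT_coord {n : ℕ} (j : Fin n) : (fun y => y j) ∈ polyLT n 2 := by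
  refine Submodule.subset_span ⟨Pi.single j 1, by simp, ?_⟩
  funext y
  rw [Finset.prod_eq_single j] <;> simp +contextual

theorem polyLT_linear {n : ℕ} (l : EuclideanSpace ℝ (Fin n) →ₗ[ℝ] ℝ) :
    (fun y => l y) ∈ polyLT n 2 := by
  have : (fun y => l y) = ∑ j, l (EuclideanSpace.single j 1) • fun y : EuclideanSpace ℝ (Fin n) => y j := by
    funext y
    conv_lhs => rw [← (EuclideanSpace.basisFun (Fin n) ℝ).sum_repr y]
    simp [mul_comm]
  rw [this]
  exact Submodule.sum_mem _ fun j _ => Submodule.smul_mem _ _ (polyLT_coord j)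

theorem polyLT_affine {n : ℕ} (l : EuclideanSpace ℝ (Fin n) →ₗ[ℝ] ℝ)
    (z : EuclideanSpace ℝ (Fin n)) : (fun y => l (y - z)) ∈ polyLT n 2 := by
  have : (fun y => l (y - z)) = (fun y => l y) - fun _ => l z := by
    funext y; simp
  rw [this]
  exact Submodule.sub_mem _ (polyLT_linear l) (polyLT_mono one_le_two (polyLT_const _))

theorem polyLT_normSq {n : ℕ} (L : EuclideanSpace ℝ (Fin n) →ₗ[ℝ] EuclideanSpace ℝ (Fin n))
    (z : EuclideanSpace ℝ (Fin n)) : (fun y => ‖L (y - z)‖ ^ 2) ∈ polyLT n 3 := by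
  have : (fun y => ‖L (y - z)‖ ^ 2) = ∑ j, (fun y => L (y - z) j) * (fun y => L (y - z) j) := by
    funext y
    rw [EuclideanSpace.real_norm_sq_eq]
    simp [sq]
  rw [this]
  refine Submodule.sum_mem _ fun j _ => ?_
  have := polyLT_affine ((EuclideanSpace.projₗ (𝕜 := ℝ) j) ∘ₗ L) z
  exact polyLT_mul (a := 1) (b := 2) this this

/-- `f` is approximated on `B` to every order `k ≤ N`: some polynomial of degree `< k` is within
`C * ε ^ k` of `f`. The order `k = 0` says `|f| ≤ C` on `B`. Requiring all orders at once makes the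
class closed under products. -/
def PolyApprox {n : ℕ} (N : ℕ) (B : Set (EuclideanSpace ℝ (Fin n))) (ε C : ℝ)
    (f : EuclideanSpace ℝ (Fin n) → ℝ) : Prop :=
  ∀ k ≤ N, ∃ P ∈ polyLT n k, ∀ y ∈ B, |f y - P y| ≤ C * ε ^ k

section PolyApprox
variable {n N : ℕ} {B : Set (EuclideanSpace ℝ (Fin n))} {ε C C' : ℝ}
  {f g : EuclideanSpace ℝ (Fin n) → ℝ}

theorem polyLT_zero (hf : f ∈ polyLT n 0) : f = 0 := by
  simpa [polyLT] using hf

theorem PolyApprox.add (hf : PolyApprox N B ε C f) (hg : PolyApprox N B ε C' g) :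
    PolyApprox N B ε (C + C') (f + g) := by
  intro k hk
  obtain ⟨P, hP, h1⟩ := hf k hk
  obtain ⟨Q, hQ, h2⟩ := hg k hk
  refine ⟨P + Q, Submodule.add_mem _ hP hQ, fun y hy => ?_⟩
  have : (f + g) y - (P + Q) y = (f y - P y) + (g y - Q y) := by simp; ring
  rw [this, add_mul]
  exact (abs_add_le _ _).trans (add_le_add (h1 y hy) (h2 y hy))

theorem PolyApprox.smul (c : ℝ) (hf : PolyApprox N B ε C f) :
    PolyApprox N B ε (|c| * C) (c • f) := by
  intro k hk
  obtain ⟨P, hP, h1⟩ := hf k hk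
  refine ⟨c • P, Submodule.smul_mem _ _ hP, fun y hy => ?_⟩
  have : (c • f) y - (c • P) y = c * (f y - P y) := by simp; ring
  rw [this, abs_mul, mul_assoc]
  exact mul_le_mul_of_nonneg_left (h1 y hy) (abs_nonneg _)

theorem PolyApprox.sum {ι : Type*} (S : Finset ι) (F : ι → EuclideanSpace ℝ (Fin n) → ℝ)
    (K : ι → ℝ) (h : ∀ i ∈ S, PolyApprox N B ε (K i) (F i)) :
    PolyApprox N B ε (∑ i ∈ S, K i) (∑ i ∈ S, F i) := by
  classical
  induction S using Finset.induction_on with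
  | empty => exact fun k _ => ⟨0, Submodule.zero_mem _, by simp⟩
  | insert a S ha ih =>
    rw [Finset.sum_insert ha, Finset.sum_insert ha]
    exact (h a (by simp)).add (ih fun i hi => h i (by simp [hi]))

theorem PolyApprox.one (hε0 : 0 ≤ ε) :
    PolyApprox N B ε 1 (1 : EuclideanSpace ℝ (Fin n) → ℝ) := by
  intro k _
  rcases Nat.eq_zero_or_pos k with rfl | hk
  · exact ⟨0, Submodule.zero_mem _, by simp⟩
  · refine ⟨1, polyLT_mono hk (polyLT_const 1), fun y _ => ?_⟩
    simp; positivity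

/-- Product rule. With `P k`, `Q k` the approximants of `f`, `g`, the approximant of `f * g` is
`∑_{j<k} (P (j+1) - P j) * Q (k-j)`, a Cauchy product truncated by degree. -/
theorem PolyApprox.mul (hε0 : 0 ≤ ε) (hε1 : ε ≤ 1) (hC : 0 ≤ C) (hC' : 0 ≤ C')
    (hf : PolyApprox N B ε C f) (hg : PolyApprox N B ε C' g) :
    PolyApprox N B ε ((1 + 2 * N) * C * C') (f * g) := by
  choose! P hP hfP using hf
  choose! Q hQ hgQ using hg
  have hP0 : P 0 = 0 := polyLT_zero (hP 0 (Nat.zero_le _))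
  have hQ0 : Q 0 = 0 := polyLT_zero (hQ 0 (Nat.zero_le _))
  intro k hk
  refine ⟨∑ j ∈ Finset.range k, (P (j + 1) - P j) * Q (k - j), ?_, fun y hy => ?_⟩
  · refine Submodule.sum_mem _ fun j hj => ?_
    rw [Finset.mem_range] at hj
    have := polyLT_mul (Submodule.sub_mem _ (hP (j + 1) (by omega))
      (polyLT_mono (Nat.le_succ j) (hP j (by omega)))) (hQ (k - j) (by omega))
    rwa [show j + (k - j) = k by omega] at this
  · have htel : ∑ j ∈ Finset.range k, (P (j + 1) y - P j y) = P k y := by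
      rw [Finset.sum_range_sub (fun j => P j y), hP0]; simp
    have hsplit : (f * g) y - (∑ j ∈ Finset.range k, (P (j + 1) - P j) * Q (k - j)) y
        = (f y - P k y) * g y +
          ∑ j ∈ Finset.range k, (P (j + 1) y - P j y) * (g y - Q (k - j) y) := by
      simp only [mul_sub, Finset.sum_sub_distrib, ← Finset.sum_mul, htel]
      simp only [Pi.mul_apply, Finset.sum_apply, Pi.sub_apply]
      ring
    rw [hsplit]
    have hgb : |g y| ≤ C' := by simpa [hQ0] using hgQ 0 (Nat.zero_le _) y hy
    have h1 : |(f y - P k y) * g y| ≤ C * C' * ε ^ k := by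
      rw [abs_mul]
      calc _ ≤ (C * ε ^ k) * C' := mul_le_mul (hfP k hk y hy) hgb (abs_nonneg _) (by positivity)
        _ = _ := by ring
    have h2 : ∀ j ∈ Finset.range k,
        |(P (j + 1) y - P j y) * (g y - Q (k - j) y)| ≤ 2 * C * C' * ε ^ k := by
      intro j hj
      rw [Finset.mem_range] at hj
      have h3 : |P (j + 1) y - P j y| ≤ 2 * C * ε ^ j := by
        have e1 := hfP j (by omega) y hy
        have e2 := hfP (j + 1) (by omega) y hy
        have e3 : ε ^ (j + 1) ≤ ε ^ j := pow_le_pow_of_le_one hε0 hε1 (Nat.le_succ j)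
        have e4 := mul_le_mul_of_nonneg_left e3 hC
        rw [abs_le] at *
        constructor <;> linarith [e1.1, e1.2, e2.1, e2.2]
      rw [abs_mul]
      calc _ ≤ (2 * C * ε ^ j) * (C' * ε ^ (k - j)) :=
            mul_le_mul h3 (hgQ _ (by omega) y hy) (abs_nonneg _) (by positivity)
        _ = 2 * C * C' * (ε ^ j * ε ^ (k - j)) := by ring
        _ = _ := by rw [← pow_add, show j + (k - j) = k by omega]
    calc _ ≤ C * C' * ε ^ k + ∑ j ∈ Finset.range k, 2 * C * C' * ε ^ k :=
          (abs_add_le _ _).trans (add_le_add h1 ((Finset.abs_sum_le_sum_abs _ _).trans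
            (Finset.sum_le_sum h2)))
      _ = (1 + 2 * k) * C * C' * ε ^ k := by simp; ring
      _ ≤ _ := by
        have : (k : ℝ) ≤ N := by exact_mod_cast hk
        gcongr

theorem PolyApprox.pow (hε0 : 0 ≤ ε) (hε1 : ε ≤ 1) (hC : 0 ≤ C)
    (hf : PolyApprox N B ε C f) (j : ℕ) :
    PolyApprox N B ε (((1 + 2 * N) * C) ^ j) (f ^ j) := by
  induction j with
  | zero => simpa using PolyApprox.one hε0
  | succ j ih =>
    have := PolyApprox.mul hε0 hε1 hC (by positivity) hf ih
    rwa [← pow_succ', ← pow_succ'] at this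

theorem PolyApprox.prod (hε0 : 0 ≤ ε) (hε1 : ε ≤ 1) {ι : Type*} (S : Finset ι)
    (F : ι → EuclideanSpace ℝ (Fin n) → ℝ) (K : ι → ℝ) (hK : ∀ i, 0 ≤ K i)
    (h : ∀ i ∈ S, PolyApprox N B ε (K i) (F i)) :
    PolyApprox N B ε (∏ i ∈ S, ((1 + 2 * N) * K i)) (∏ i ∈ S, F i) := by
  classical
  induction S using Finset.induction_on with
  | empty => simpa using PolyApprox.one hε0
  | insert a S ha ih =>
    rw [Finset.prod_insert ha, Finset.prod_insert ha]
    exact PolyApprox.mul hε0 hε1 (hK a) (Finset.prod_nonneg fun i _ => by have := hK i; positivity)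
      (h a (by simp)) (ih fun i hi => h i (by simp [hi]))

end PolyApprox

/-! ### Taylor approximation of the kernel -/

/-- The binomial expansion of `(1 + t) ^ b` at `0`, to order `N`. -/
theorem rpow_taylor (b : ℝ) (N : ℕ) : ∃ η > 0, ∃ K ≥ 0, ∃ c : ℕ → ℝ, ∀ t : ℝ, |t| < η →
    |(1 + t) ^ b - ∑ j ∈ Finset.range N, c j * t ^ j| ≤ K * |t| ^ N := by
  obtain ⟨K, hK, h⟩ := (Real.one_add_rpow_hasFPowerSeriesAt_zero (a := b)).isBigO_sub_partialSum_pow N |>.exists_nonneg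
  rw [Asymptotics.IsBigOWith, Metric.eventually_nhds_iff] at h
  obtain ⟨η, hη, h⟩ := h
  refine ⟨η, hη, K, hK, fun j => (binomialSeries ℝ b).coeff j, fun t ht => ?_⟩
  have := h (y := t) (by simpa using ht)
  simpa [FormalMultilinearSeries.partialSum, mul_comm] using this

/-- Approximation of a single normalised factor. With `v = x - L z` and `R = ‖v‖`,
`‖x - L y‖² = R² (1 + t y)` for a quadratic polynomial `t` of size `O(ε)` on `B`, whose linear part is
`O(ε)` and whose quadratic part is `O(ε²)`; `(1 + t) ^ (-s/2)` is then expanded in powers of `t`. -/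
theorem factor_approx (n N : ℕ) (s : ℝ) : ∃ ε₀ > 0, ∃ C ≥ 0,
    ∀ (L : EuclideanSpace ℝ (Fin n) →ₗ[ℝ] EuclideanSpace ℝ (Fin n))
      (x z : EuclideanSpace ℝ (Fin n)) (B : Set (EuclideanSpace ℝ (Fin n))) (ε : ℝ),
      0 ≤ ε → ε ≤ 1 → ε ≤ ε₀ → 0 < ‖x - L z‖ → (∀ y ∈ B, ‖L (y - z)‖ ≤ ε * ‖x - L z‖) →
      PolyApprox N B ε C (fun y => ‖x - L z‖ ^ s * ‖x - L y‖ ^ (-s)) := by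
  obtain ⟨η, hη, K, hK, c, hc⟩ := rpow_taylor (-s / 2) N
  refine ⟨η / 4, by positivity, (∑ j ∈ Finset.range N, |c j| * ((1 + 2 * N) * 3) ^ j) + K * 3 ^ N,
    by positivity, fun L x z B ε hε0 hε1 hεη hR hB => ?_⟩
  set v := x - L z with hv
  set R := ‖v‖ with hRdef
  let t1 : EuclideanSpace ℝ (Fin n) → ℝ := fun y => (-2 / R ^ 2) * inner ℝ v (L (y - z))
  let t : EuclideanSpace ℝ (Fin n) → ℝ := fun y => t1 y + (1 / R ^ 2) * ‖L (y - z)‖ ^ 2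
  have hq : ∀ y ∈ B, |(1 / R ^ 2) * ‖L (y - z)‖ ^ 2| ≤ ε ^ 2 := by
    intro y hy
    rw [abs_of_nonneg (by positivity), one_div, inv_mul_le_iff₀ (by positivity), ← mul_pow, mul_comm R]
    gcongr
    exact hB y hy
  have ht1b : ∀ y ∈ B, |t1 y| ≤ 2 * ε := by
    intro y hy
    have := abs_real_inner_le_norm v (L (y - z))
    have h2 := hB y hy
    have h3 : |inner ℝ v (L (y - z))| ≤ ε * R ^ 2 := by
      calc _ ≤ R * (ε * R) := this.trans (by gcongr)
        _ = _ := by ring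
    simp only [t1]
    rw [abs_mul, abs_div, abs_neg, abs_two, abs_of_pos (a := R ^ 2) (by positivity), div_mul_eq_mul_div,
      div_le_iff₀ (by positivity)]
    linarith
  have htb : ∀ y ∈ B, |t y| ≤ 3 * ε := by
    intro y hy
    have h1 := ht1b y hy
    have h2 := hq y hy
    have h3 : ε ^ 2 ≤ ε := by nlinarith
    exact (abs_add_le _ _).trans (by linarith)
  have ht1m : t1 ∈ polyLT n 2 :=
    Submodule.smul_mem _ (-2 / R ^ 2) (polyLT_affine ((innerₛₗ ℝ v) ∘ₗ L) z)
  have htm : t ∈ polyLT n 3 := Submodule.add_mem _ (polyLT_mono (by norm_num) ht1m)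
    (Submodule.smul_mem _ (1 / R ^ 2) (polyLT_normSq L z))
  have ht : PolyApprox N B ε 3 t := by
    intro k _
    match k with
    | 0 => exact ⟨0, Submodule.zero_mem _, fun y hy => by
        have := htb y hy; simp; linarith⟩
    | 1 => exact ⟨0, Submodule.zero_mem _, fun y hy => by simpa using htb y hy⟩
    | 2 => exact ⟨t1, ht1m, fun y hy => by
        have := hq y hy
        simp only [t, add_sub_cancel_left]
        nlinarith [sq_nonneg ε]⟩
    | k + 3 => exact ⟨t, polyLT_mono (by omega) htm, fun y hy => by simp; positivity⟩
  have hfun : (fun y => R ^ s * ‖x - L y‖ ^ (-s)) = fun y => (1 + t y) ^ (-s / 2) := by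
    funext y
    have h1 : x - L y = v - L (y - z) := by rw [hv, map_sub]; abel
    have h2 : ‖x - L y‖ ^ 2 = R ^ 2 * (1 + t y) := by
      rw [h1, norm_sub_sq_real]
      simp only [t, t1]
      field_simp
      ring
    have h3 : 0 ≤ 1 + t y := by
      have : 0 ≤ R ^ 2 * (1 + t y) := by rw [← h2]; positivity
      exact nonneg_of_mul_nonneg_right this (by positivity)
    have h4 : ∀ u : ℝ, 0 ≤ u → u ^ (-s) = (u ^ 2) ^ (-s / 2) := by
      intro u hu
      rw [← Real.rpow_natCast, ← Real.rpow_mul hu]; congr 1; push_cast; ring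
    rw [h4 _ (norm_nonneg _), h2, Real.mul_rpow (by positivity) h3, ← h4 _ hR.le, ← mul_assoc,
      ← Real.rpow_add hR]
    simp
  rw [hfun]
  -- Every `t ^ j` is itself approximable to all orders, so the truncated series is too.
  have hsum := PolyApprox.sum (Finset.range N) (fun j => c j • t ^ j) _
    (fun j _ => (PolyApprox.pow hε0 hε1 (by norm_num) ht j).smul (c j))
  have hrem : PolyApprox N B ε (K * 3 ^ N)
      (fun y => (1 + t y) ^ (-s / 2) - ∑ j ∈ Finset.range N, c j * t y ^ j) := by
    intro k hk
    refine ⟨0, Submodule.zero_mem _, fun y hy => ?_⟩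
    have h1 := htb y hy
    have hlt : |t y| < η := by linarith
    have h2 := hc (t y) hlt
    have h3 : |t y| ^ N ≤ 3 ^ N * ε ^ k := by
      calc _ ≤ (3 * ε) ^ N := by gcongr
        _ = 3 ^ N * ε ^ N := mul_pow _ _ _
        _ ≤ _ := by gcongr ?_ * ?_; exact pow_le_pow_of_le_one hε0 hε1 hk
    simp only [Pi.zero_apply, sub_zero]
    rw [mul_assoc]
    exact h2.trans (by gcongr)
  convert hsum.add hrem using 1
  funext y
  simp

/-- Away from all the points `L i z`, at distance at least `D ≥ c * δ`, the kernel agrees on the ball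
`B(z, δ)` with a polynomial of degree `< N` up to `C * D ^ (-∑ s) * (δ / D) ^ N`. -/
theorem far_approx {n m : ℕ} (N : ℕ)
    (L : Fin m → EuclideanSpace ℝ (Fin n) →ₗ[ℝ] EuclideanSpace ℝ (Fin n)) (s : Fin m → ℝ)
    (hs : ∀ i, 0 < s i) : ∃ c > 0, ∃ C > 0, ∀ (x z : EuclideanSpace ℝ (Fin n)) (δ D : ℝ),
      0 < δ → c * δ ≤ D → (∀ i, D ≤ ‖x - L i z‖) →
      ∃ Q ∈ polyLT n N, ∀ y ∈ Metric.ball z δ,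
        |∏ i, ‖x - L i y‖ ^ (-(s i)) - Q y| ≤ C * D ^ (-∑ i, s i) * (δ / D) ^ N := by
  choose ε₀ hε₀ K hK h using fun i => factor_approx n N (s i)
  obtain ⟨e, he, he'⟩ : ∃ e > 0, ∀ i, e ≤ ε₀ i := by
    have : ∀ᶠ e in nhdsWithin (0 : ℝ) (Set.Ioi 0), ∀ i, e < ε₀ i :=
      Filter.eventually_all.2 fun i => nhdsWithin_le_nhds (eventually_lt_nhds (hε₀ i))
    obtain ⟨e, h1, h2⟩ := (this.and self_mem_nhdsWithin).exists
    exact ⟨e, h2, fun i => (h1 i).le⟩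
  obtain ⟨M, hM0, hM⟩ : ∃ M : ℝ, 0 < M ∧ ∀ i, ∀ y, ‖L i y‖ ≤ M * ‖y‖ := by
    refine ⟨∑ i, ‖LinearMap.toContinuousLinearMap (L i)‖ + 1, by positivity, fun i y => ?_⟩
    have h1 := (LinearMap.toContinuousLinearMap (L i)).le_opNorm y
    have h2 : ‖LinearMap.toContinuousLinearMap (L i)‖ ≤ ∑ i, ‖LinearMap.toContinuousLinearMap (L i)‖ :=
      Finset.single_le_sum (f := fun i => ‖LinearMap.toContinuousLinearMap (L i)‖)
        (fun _ _ => norm_nonneg _) (Finset.mem_univ i)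
    refine h1.trans ?_
    gcongr
    linarith
  refine ⟨M / min e 1, by positivity, (∏ i, ((1 + 2 * N) * K i)) * M ^ N + 1, ?_,
    fun x z δ D hδ hD hDi => ?_⟩
  · have : 0 ≤ ∏ i, ((1 + 2 * N) * K i) :=
      Finset.prod_nonneg fun i _ => by have := hK i; positivity
    positivity
  have hmin : 0 < min e 1 := lt_min he one_pos
  have hD0 : 0 < D := lt_of_lt_of_le (by positivity) hD
  have hε : M * δ / D ≤ min e 1 := by
    rw [div_mul_eq_mul_div, div_le_iff₀ hmin] at hD
    rw [div_le_iff₀ hD0]; linarith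
  have hε1 := hε.trans (min_le_right _ _)
  have hεe := hε.trans (min_le_left _ _)
  have hε0 : 0 ≤ M * δ / D := by positivity
  have key := PolyApprox.prod hε0 hε1 Finset.univ _ K hK fun i _ =>
    h i (L i) x z (Metric.ball z δ) (M * δ / D) hε0 hε1 (hεe.trans (he' i)) (hD0.trans_le (hDi i))
      (fun y hy => by
        rw [mem_ball_iff_norm] at hy
        calc ‖L i (y - z)‖ ≤ M * ‖y - z‖ := hM i _
          _ ≤ M * δ := by gcongr
          _ = M * δ / D * D := by field_simp
          _ ≤ _ := by gcongr; exact hDi i)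
  obtain ⟨P, hP, hPb⟩ := key N le_rfl
  refine ⟨(∏ i, ‖x - L i z‖ ^ (-(s i))) • P, Submodule.smul_mem _ _ hP, fun y hy => ?_⟩
  have hb := hPb y hy
  have hpos : ∀ i, 0 < ‖x - L i z‖ := fun i => hD0.trans_le (hDi i)
  have h1 : ∏ i, ‖x - L i y‖ ^ (-(s i)) = (∏ i, ‖x - L i z‖ ^ (-(s i))) *
      (∏ i, fun y => ‖x - L i z‖ ^ (s i) * ‖x - L i y‖ ^ (-(s i))) y := by
    rw [Finset.prod_apply, ← Finset.prod_mul_distrib]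
    refine Finset.prod_congr rfl fun i _ => ?_
    rw [← mul_assoc, ← Real.rpow_add (hpos i)]; simp
  have h2 : ∏ i, ‖x - L i z‖ ^ (-(s i)) ≤ D ^ (-∑ i, s i) := by
    rw [← Finset.sum_neg_distrib, Real.rpow_sum_of_pos hD0]
    refine Finset.prod_le_prod (fun _ _ => by positivity) fun i _ => ?_
    exact Real.rpow_le_rpow_of_nonpos hD0 (hDi i) (by linarith [hs i])
  have h0 : 0 ≤ ∏ i, ‖x - L i z‖ ^ (-(s i)) := Finset.prod_nonneg fun _ _ => by positivity
  rw [Pi.smul_apply, smul_eq_mul, h1, ← mul_sub, abs_mul, abs_of_nonneg h0]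
  calc _ ≤ D ^ (-∑ i, s i) * ((∏ i, ((1 + 2 * N) * K i)) * (M * δ / D) ^ N) :=
        mul_le_mul h2 hb (abs_nonneg _) (by positivity)
    _ = (∏ i, ((1 + 2 * N) * K i)) * M ^ N * D ^ (-∑ i, s i) * (δ / D) ^ N := by
        rw [mul_div_assoc, mul_pow]; ring
    _ ≤ _ := by gcongr; linarith

/-! ### Pointwise decay and the `L^q` norm -/

/-- The inequality can be strict: when `w i = 0` the real power `0 ^ (-s i)` is `0`, the extended one
is `⊤`. -/
theorem enorm_kernel_le {E : Type*} [NormedAddCommGroup E] {m : ℕ} (w : Fin m → E) (s : Fin m → ℝ)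
    (hs : ∀ i, 0 < s i) :
    ‖∏ i, ‖w i‖ ^ (-(s i))‖ₑ ≤ ∏ i, ‖w i‖ₑ ^ (-(s i)) := by
  rw [Real.enorm_of_nonneg (Finset.prod_nonneg fun _ _ => by positivity),
    ENNReal.ofReal_prod_of_nonneg (fun _ _ => by positivity)]
  refine Finset.prod_le_prod' fun i _ => ?_
  rcases (norm_nonneg (w i)).eq_or_lt with h | h
  · rw [← h, Real.zero_rpow (by linarith [hs i])]; simp
  · rw [← ENNReal.ofReal_rpow_of_pos h, ofReal_norm]

/-- Decay of the operator on a bounded function supported in `B(z, δ)` with vanishing moments up to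
order `N - 1`, measured from the point `L k z` nearest to `x`. -/
theorem pointwise_bound {n m : ℕ} (hm : 0 < m) (N : ℕ)
    (L : Fin m → EuclideanSpace ℝ (Fin n) →ₗ[ℝ] EuclideanSpace ℝ (Fin n)) (s : Fin m → ℝ)
    (hs0 : ∀ i, 0 < s i) (hs : ∀ i, s i < Module.finrank ℝ (LinearMap.range (L i)))
    (hsum : ∑ i, Module.finrank ℝ (LinearMap.range (L i)) = n)
    (hker : ∀ y, (∀ i, L i y = 0) → y = 0) :
    ∃ C > 0, ∀ (z : EuclideanSpace ℝ (Fin n)) (δ A : ℝ) (a : EuclideanSpace ℝ (Fin n) → ℝ),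
      0 < δ → 0 ≤ A → Function.support a ⊆ Metric.ball z δ →
      (∀ᵐ y, ‖a y‖ₑ ≤ ENNReal.ofReal A) →
      (∀ Q ∈ polyLT n N, Integrable (fun y => Q y * a y) ∧ ∫ y, Q y * a y = 0) →
      ∀ x, ∃ k, ‖∫ y, (∏ i, ‖x - L i y‖ ^ (-(s i))) * a y‖ₑ ≤ ENNReal.ofReal
        (C * A * δ ^ (n - ∑ i, s i) * (1 + ‖x - L k z‖ / δ) ^ (-(∑ i, s i + N))) := by
  obtain ⟨C₁, hC₁, hnear⟩ := near_bound (volume : Measure (EuclideanSpace ℝ (Fin n))) L s hs0 hs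
    (by simpa using hsum) hker
  obtain ⟨c, hc, C₂, hC₂, hfar⟩ := far_approx N L s hs0
  set σ := ∑ i, s i with hσ
  have hσ0 : 0 ≤ σ := Finset.sum_nonneg fun i _ => (hs0 i).le
  set V := (volume (Metric.ball (0 : EuclideanSpace ℝ (Fin n)) 1)).toReal with hV
  refine ⟨C₁ * (1 + c) ^ (σ + N) + C₂ * V * (1 + 1 / c) ^ (σ + N), by positivity,
    fun z δ A a hδ hA hsupp hbd hmom x => ?_⟩
  have : Nonempty (Fin m) := ⟨⟨0, hm⟩⟩
  obtain ⟨k, hk⟩ := Finite.exists_min fun i => ‖x - L i z‖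
  refine ⟨k, ?_⟩
  set D := ‖x - L k z‖ with hD
  set u := D / δ with hu
  have hu0 : 0 ≤ u := by positivity
  have hball : ∀ F : EuclideanSpace ℝ (Fin n) → ℝ, ∫⁻ y, ‖F y * a y‖ₑ ≤
      ∫⁻ y in Metric.ball z δ, ‖F y‖ₑ * ENNReal.ofReal A := by
    intro F
    rw [← lintegral_indicator measurableSet_ball]
    refine lintegral_mono_ae ?_
    filter_upwards [hbd] with y hy
    by_cases hyb : y ∈ Metric.ball z δ
    · rw [Set.indicator_of_mem hyb, enorm_mul]
      gcongr
    · have : a y = 0 := by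
        by_contra h
        exact hyb (hsupp h)
      simp [this]
  -- Within `c * δ` of `L k z` size alone suffices; beyond it the moments are used.
  rcases lt_or_ge D (c * δ) with hcase | hcase
  · have huc : u ≤ c := by rw [hu, div_le_iff₀ hδ]; exact hcase.le
    have h1 : ‖∫ y, (∏ i, ‖x - L i y‖ ^ (-(s i))) * a y‖ₑ ≤
        ENNReal.ofReal (C₁ * δ ^ (n - σ) * A) := by
      refine (enorm_integral_le_lintegral_enorm _).trans ((hball _).trans ?_)
      rw [lintegral_mul_const' _ _ ENNReal.ofReal_ne_top, ENNReal.ofReal_mul (by positivity)]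
      gcongr
      refine (lintegral_mono fun y => enorm_kernel_le _ s hs0).trans ?_
      simpa using hnear x z δ hδ
    refine h1.trans (ENNReal.ofReal_le_ofReal ?_)
    have h2 : 1 ≤ (1 + c) ^ (σ + N) * (1 + u) ^ (-(σ + N)) := by
      rw [Real.rpow_neg (by positivity), ← div_eq_mul_inv, one_le_div (by positivity)]
      gcongr
    have h3 : 0 ≤ C₂ * V * (1 + 1 / c) ^ (σ + N) * (A * δ ^ (n - σ) * (1 + u) ^ (-(σ + N))) := by
      positivity
    have h4 : 0 ≤ C₁ * δ ^ (n - σ) * A := by positivity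
    nlinarith [mul_le_mul_of_nonneg_left h2 h4]
  · have hD0 : 0 < D := lt_of_lt_of_le (by positivity) hcase
    have hup : 0 < u := by positivity
    have hcu : c ≤ u := by rw [hu, le_div_iff₀ hδ]; exact hcase
    obtain ⟨Q, hQ, hQb⟩ := hfar x z δ D hδ hcase hk
    obtain ⟨hQi, hQ0⟩ := hmom Q hQ
    set E := C₂ * D ^ (-σ) * (δ / D) ^ N with hE
    have hE0 : 0 ≤ E := by positivity
    have h1 : ‖∫ y, (∏ i, ‖x - L i y‖ ^ (-(s i))) * a y‖ₑ ≤
        ENNReal.ofReal (E * A * (δ ^ n * V)) := by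
      by_cases hint : Integrable fun y => (∏ i, ‖x - L i y‖ ^ (-(s i))) * a y
      · have h2 : ∫ y, (∏ i, ‖x - L i y‖ ^ (-(s i))) * a y
            = ∫ y, (∏ i, ‖x - L i y‖ ^ (-(s i)) - Q y) * a y := by
          simp_rw [sub_mul]
          rw [integral_sub hint hQi, hQ0, sub_zero]
        rw [h2]
        refine (enorm_integral_le_lintegral_enorm _).trans ((hball _).trans ?_)
        calc _ ≤ ∫⁻ y in Metric.ball z δ, ENNReal.ofReal E * ENNReal.ofReal A := by
              refine setLIntegral_mono' measurableSet_ball fun y hy => ?_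
              gcongr
              rw [← ofReal_norm]
              exact ENNReal.ofReal_le_ofReal (hQb y hy)
          _ = _ := by
              rw [setLIntegral_const, Measure.addHaar_ball_of_pos _ _ hδ, finrank_euclideanSpace_fin,
                ENNReal.ofReal_mul (p := E * A) (by positivity), ENNReal.ofReal_mul (p := E) hE0,
                ENNReal.ofReal_mul (p := δ ^ n) (by positivity), hV,
                ENNReal.ofReal_toReal measure_ball_lt_top.ne]
      -- a non-integrable integrand has integral `0` by convention
      · rw [integral_undef hint]; simp
    refine h1.trans (ENNReal.ofReal_le_ofReal ?_)
    have hDu : D = u * δ := by rw [hu]; field_simp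
    have h2 : E * A * (δ ^ n * V) = C₂ * V * (A * δ ^ (n - σ)) * u ^ (-(σ + N)) := by
      rw [hE, hDu, Real.mul_rpow hu0 hδ.le, neg_add, Real.rpow_add hup, Real.rpow_neg hu0 N,
        Real.rpow_natCast, sub_eq_add_neg, Real.rpow_add hδ, Real.rpow_natCast]
      have : δ / (u * δ) = u⁻¹ := by field_simp
      rw [this, inv_pow]
      ring
    have h3 : u ^ (-(σ + N)) ≤ (1 + 1 / c) ^ (σ + N) * (1 + u) ^ (-(σ + N)) := by
      rw [Real.rpow_neg hu0, Real.rpow_neg (by positivity), ← div_eq_mul_inv,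
        ← Real.div_rpow (by positivity) (by positivity), ← Real.inv_rpow hu0]
      gcongr
      rw [le_div_iff₀ (by positivity), mul_add, mul_one, inv_mul_cancel₀ hup.ne', add_comm, ← one_div]
      gcongr
    have h4 : 0 ≤ C₁ * (1 + c) ^ (σ + N) * (A * δ ^ (n - σ) * (1 + u) ^ (-(σ + N))) := by
      positivity
    rw [h2]
    have h5 : 0 ≤ C₂ * V * (A * δ ^ (n - σ)) := by positivity
    nlinarith [mul_le_mul_of_nonneg_left h3 h5]

/-- A function with the decay of `pointwise_bound` is in `L^q` when `w * q > n`: its `q`-th power is at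
most the sum of the `m` bumps centred at the `b k`. -/
theorem eLpNorm_bound {n m : ℕ} {q w : ℝ} (hq : 0 < q) (hw : n < w * q) :
    ∃ C > 0, ∀ (G : EuclideanSpace ℝ (Fin n) → ℝ) (b : Fin m → EuclideanSpace ℝ (Fin n))
      (δ H : ℝ), 0 < δ → 0 ≤ H →
      (∀ x, ∃ k, ‖G x‖ₑ ≤ ENNReal.ofReal (H * (1 + ‖x - b k‖ / δ) ^ (-w))) →
      eLpNorm G (ENNReal.ofReal q) volume ≤ ENNReal.ofReal (C * H * δ ^ (n / q)) := by
  set I := ∫⁻ x : EuclideanSpace ℝ (Fin n), ENNReal.ofReal ((1 + ‖x‖) ^ (-(w * q))) with hI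
  have hIfin : I < ⊤ := finite_integral_one_add_norm (by simpa using hw)
  refine ⟨(m * I.toReal) ^ (1 / q) + 1, by positivity, fun G b δ H hδ hH hG => ?_⟩
  rw [eLpNorm_eq_lintegral_rpow_enorm_toReal (by simpa using hq) ENNReal.ofReal_ne_top,
    ENNReal.toReal_ofReal hq.le]
  have hscale : ∀ b : EuclideanSpace ℝ (Fin n),
      ∫⁻ x, ENNReal.ofReal ((1 + ‖x - b‖ / δ) ^ (-(w * q))) = ENNReal.ofReal (δ ^ n) * I := by
    intro b
    rw [lintegral_sub_right_eq_self (μ := volume)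
      (fun x : EuclideanSpace ℝ (Fin n) => ENNReal.ofReal ((1 + ‖x‖ / δ) ^ (-(w * q)))) b,
      lintegral_scale volume (by fun_prop) hδ, finrank_euclideanSpace_fin, hI]
    congr 1
    refine lintegral_congr fun y => ?_
    rw [norm_smul, Real.norm_eq_abs, abs_of_pos hδ, mul_div_cancel_left₀ _ hδ.ne']
  have h1 : ∫⁻ x, ‖G x‖ₑ ^ q ≤ ENNReal.ofReal (H ^ q * δ ^ n * (m * I.toReal)) := by
    calc ∫⁻ x, ‖G x‖ₑ ^ q
        ≤ ∫⁻ x, ∑ k, ENNReal.ofReal (H ^ q) *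
            ENNReal.ofReal ((1 + ‖x - b k‖ / δ) ^ (-(w * q))) := by
          refine lintegral_mono fun x => ?_
          obtain ⟨k, hk⟩ := hG x
          refine le_trans ?_ (Finset.single_le_sum (f := fun k => ENNReal.ofReal (H ^ q) *
            ENNReal.ofReal ((1 + ‖x - b k‖ / δ) ^ (-(w * q)))) (fun _ _ => zero_le)
            (Finset.mem_univ k))
          have h2 := ENNReal.rpow_le_rpow hk hq.le
          rw [ENNReal.ofReal_rpow_of_nonneg (by positivity) hq.le,
            Real.mul_rpow hH (by positivity), ← Real.rpow_mul (by positivity), neg_mul,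
            ENNReal.ofReal_mul (by positivity)] at h2
          exact h2
      _ = _ := by
          rw [lintegral_finsetSum _ (fun k _ => by fun_prop)]
          simp_rw [lintegral_const_mul' _ _ ENNReal.ofReal_ne_top, hscale]
          rw [Finset.sum_const, Finset.card_univ, Fintype.card_fin, nsmul_eq_mul,
            ENNReal.ofReal_mul (by positivity), ENNReal.ofReal_mul (by positivity),
            ENNReal.ofReal_mul (by positivity), ENNReal.ofReal_toReal hIfin.ne,
            ENNReal.ofReal_natCast]
          ring
  refine (ENNReal.rpow_le_rpow h1 (by positivity)).trans ?_
  rw [ENNReal.ofReal_rpow_of_nonneg (by positivity) (by positivity)]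
  refine ENNReal.ofReal_le_ofReal ?_
  rw [Real.mul_rpow (by positivity) (by positivity), Real.mul_rpow (by positivity) (by positivity),
    ← Real.rpow_mul hH, mul_one_div_cancel hq.ne', Real.rpow_one, ← Real.rpow_natCast,
    ← Real.rpow_mul hδ.le, mul_one_div]
  have : 0 ≤ H * δ ^ ((n : ℝ) / q) := by positivity
  nlinarith

/-! ### Atoms -/

/-- The size condition of an atom in terms of the radius: `|a| ≤ κ δ ^ (-n/p)` almost everywhere. -/
theorem atom_bound {n : ℕ} (p : ℝ) : ∃ κ > 0, ∀ (z : EuclideanSpace ℝ (Fin n)) (δ : ℝ)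
    (a : EuclideanSpace ℝ (Fin n) → ℝ), IsPAtom n p z δ a →
      ∀ᵐ y, ‖a y‖ₑ ≤ ENNReal.ofReal (κ * δ ^ (-(n / p))) := by
  set V := (volume (Metric.ball (0 : EuclideanSpace ℝ (Fin n)) 1)).toReal with hV
  have hV0 : 0 < V := ENNReal.toReal_pos (Metric.measure_ball_pos _ _ one_pos).ne'
    measure_ball_lt_top.ne
  refine ⟨V ^ (-(1 / p)), by positivity, fun z δ a ha => ?_⟩
  obtain ⟨hδ, -, -, hsup, -⟩ := ha
  have hvol : volume (Metric.ball z δ) = ENNReal.ofReal (δ ^ n * V) := by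
    rw [Measure.addHaar_ball_of_pos _ _ hδ, finrank_euclideanSpace_fin,
      ENNReal.ofReal_mul (by positivity), hV, ENNReal.ofReal_toReal measure_ball_lt_top.ne]
  rw [hvol, ENNReal.ofReal_rpow_of_pos (by positivity), eLpNorm_exponent_top] at hsup
  filter_upwards [ae_le_eLpNormEssSup (f := a) (μ := volume)] with y hy
  refine (hy.trans hsup).trans (le_of_eq ?_)
  rw [Real.mul_rpow (by positivity) hV0.le, ← Real.rpow_natCast, ← Real.rpow_mul hδ.le, mul_comm]
  congr 3
  ring

/-- An atom is orthogonal to all polynomials of degree at most `⌊n(p⁻¹ - 1)⌋`. -/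
theorem atom_moments {n : ℕ} {p : ℝ} {z : EuclideanSpace ℝ (Fin n)} {δ A : ℝ}
    {a : EuclideanSpace ℝ (Fin n) → ℝ} (ha : IsPAtom n p z δ a)
    (hbd : ∀ᵐ y, ‖a y‖ₑ ≤ ENNReal.ofReal A) {Q : EuclideanSpace ℝ (Fin n) → ℝ}
    (hQ : Q ∈ polyLT n (⌊(n : ℝ) * (p⁻¹ - 1)⌋₊ + 1)) :
    Integrable (fun y => Q y * a y) ∧ ∫ y, Q y * a y = 0 := by
  obtain ⟨hδ, hmeas, hsupp, -, hmom⟩ := ha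
  have hint : IntegrableOn a (Metric.closedBall z δ) := by
    refine Measure.integrableOn_of_bounded (M := max A 0) measure_closedBall_lt_top.ne
      hmeas.aestronglyMeasurable (ae_restrict_of_ae ?_)
    filter_upwards [hbd] with y hy
    rw [← ofReal_norm] at hy
    exact (ENNReal.ofReal_le_ofReal_iff (le_max_right A 0)).1
      (hy.trans (ENNReal.ofReal_le_ofReal (le_max_left _ _)))
  induction hQ using Submodule.span_induction with
  | mem f hf =>
    obtain ⟨β, hβ, rfl⟩ := hf
    refine ⟨?_, hmom β (by omega)⟩
    have hc : Continuous fun y : EuclideanSpace ℝ (Fin n) => ∏ i, y i ^ β i := by fun_prop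
    refine (integrableOn_iff_integrable_of_support_subset (s := Metric.closedBall z δ) ?_).1
      (hint.continuousOn_mul hc.continuousOn (isCompact_closedBall z δ))
    exact (Function.support_mul_subset_right _ _).trans (hsupp.trans Metric.ball_subset_closedBall)
  | zero => simp
  | add f g _ _ hf hg =>
    simp only [Pi.add_apply, add_mul]
    exact ⟨hf.1.add hg.1, by rw [integral_add hf.1 hg.1, hf.2, hg.2, add_zero]⟩
  | smul c f _ hf =>
    simp only [Pi.smul_apply, smul_eq_mul, mul_assoc]
    exact ⟨hf.1.const_mul c, by rw [integral_const_mul, hf.2, mul_zero]⟩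

/-! ### The uniform bound on atoms -/

/-- Under the hypotheses on the singular matrices `A i`, for `0 < r < 1`,
`0 < p ≤ 1` and `1/q = 1/p - r`, there is a constant `C > 0`, independent of the atom, such
that `‖T_r a‖_{L^q} ≤ C` for every `p`-atom `a`. -/
theorem Tr_atom_uniform_Lq_bound
    (n m : ℕ) (hm : 1 < m) (hmn : m ≤ n)
    (ni : Fin m → ℕ) (hni : ∀ i, 0 < ni i) (hsum : ∑ i, ni i = n)
    (A : Fin m → Matrix (Fin n) (Fin n) ℝ)
    (hsing : ∀ i, ¬ IsUnit (A i))
    (hdim : ∀ j, Module.finrank ℝ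
      (LinearMap.ker (Matrix.toEuclideanLin (A j))) = n - ni j)
    (hindep : iSupIndep fun i : Fin m =>
      ⨅ j ∈ ({i}ᶜ : Set (Fin m)), LinearMap.ker (Matrix.toEuclideanLin (A j)))
    (hspan : (⨆ i : Fin m,
      ⨅ j ∈ ({i}ᶜ : Set (Fin m)), LinearMap.ker (Matrix.toEuclideanLin (A j))) = ⊤)
    (hinv : IsUnit (∑ i, A i))
    (r p q : ℝ) (hr0 : 0 < r) (hr1 : r < 1)
    (hp0 : 0 < p) (hp1 : p ≤ 1) (hq : 1 / q = 1 / p - r)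
    (α : Fin m → ℝ) (hα : ∀ i, α i = r * ni i) :
    ∃ C > 0, ∀ (z : EuclideanSpace ℝ (Fin n)) (δ : ℝ) (a : EuclideanSpace ℝ (Fin n) → ℝ),
      IsPAtom n p z δ a →
      eLpNorm
        (fun x => ∫ y, (∏ i, ‖x - Matrix.toEuclideanLin (A i) y‖ ^ (-(ni i : ℝ) + α i)) * a y)
        (ENNReal.ofReal q) volume ≤ ENNReal.ofReal C := by
  have hle : ∀ i, ni i ≤ n := fun i => by
    rw [← hsum]; exact Finset.single_le_sum (fun _ _ => Nat.zero_le _) (Finset.mem_univ i)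
  have hrange : ∀ i, Module.finrank ℝ (LinearMap.range (Matrix.toEuclideanLin (A i))) = ni i := by
    intro i
    have h := LinearMap.finrank_range_add_finrank_ker (Matrix.toEuclideanLin (A i))
    rw [hdim i, finrank_euclideanSpace_fin] at h
    have := hle i
    omega
  -- a common zero lies in two different summands of the direct sum, as `m > 1`
  have hker : ∀ y, (∀ i, Matrix.toEuclideanLin (A i) y = 0) → y = 0 := by
    intro y hy
    have hne : (⟨0, by omega⟩ : Fin m) ≠ ⟨1, hm⟩ := by simp
    have hmem : ∀ i : Fin m, y ∈ ⨅ j ∈ ({i}ᶜ : Set (Fin m)),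
        LinearMap.ker (Matrix.toEuclideanLin (A j)) := fun i => by
      simp only [Submodule.mem_iInf, LinearMap.mem_ker]
      exact fun j _ => hy j
    exact Submodule.disjoint_def.1 (hindep.pairwiseDisjoint hne) y (hmem _) (hmem _)
  have hn0 : (0 : ℝ) < n := by exact_mod_cast (by omega : 0 < n)
  have hq0 : 0 < q := by
    have : 1 ≤ 1 / p := by rwa [one_le_div hp0]
    exact one_div_pos.1 (by linarith)
  set s : Fin m → ℝ := fun i => ni i * (1 - r) with hs
  have hni' : ∀ i, (0 : ℝ) < ni i := fun i => by exact_mod_cast hni i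
  have hs0 : ∀ i, 0 < s i := fun i => mul_pos (hni' i) (by linarith)
  have hs1 : ∀ i, s i < Module.finrank ℝ (LinearMap.range (Matrix.toEuclideanLin (A i))) :=
    fun i => by rw [hrange]; simp only [hs]; nlinarith [hni' i]
  have hσ : ∑ i, s i = n * (1 - r) := by
    rw [← Finset.sum_mul, ← Nat.cast_sum, hsum]
  set N := ⌊(n : ℝ) * (p⁻¹ - 1)⌋₊ + 1 with hN
  obtain ⟨C₁, hC₁, hpt⟩ := pointwise_bound (by omega) N (fun i => Matrix.toEuclideanLin (A i)) s
    hs0 hs1 (by simpa only [hrange] using hsum) hker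
  have hw : (n : ℝ) < (∑ i, s i + N) * q := by
    have h1 : (n : ℝ) * (p⁻¹ - 1) < N := by rw [hN]; exact_mod_cast Nat.lt_floor_add_one _
    rw [← div_lt_iff₀ hq0, div_eq_mul_one_div, hq, hσ, one_div]
    linarith
  obtain ⟨C₂, hC₂, hLq⟩ := eLpNorm_bound (n := n) (m := m) hq0 hw
  obtain ⟨κ, hκ, hatom⟩ := atom_bound (n := n) p
  refine ⟨C₂ * C₁ * κ, by positivity, fun z δ a ha => ?_⟩
  have hδ := ha.1
  have hbd := hatom z δ a ha
  refine (hLq _ (fun i => Matrix.toEuclideanLin (A i) z) δ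
    (C₁ * (κ * δ ^ (-(n / p))) * δ ^ (n - ∑ i, s i)) hδ (by positivity) fun x => ?_).trans
    (le_of_eq ?_)
  · obtain ⟨k, hk⟩ := hpt z δ _ a hδ (by positivity) ha.2.2.1 hbd
      (fun Q hQ => atom_moments ha hbd hQ) x
    refine ⟨k, ?_⟩
    have hexp : ∀ i, -(ni i : ℝ) + α i = -(s i) := fun i => by rw [hα]; simp only [hs]; ring
    simp only [hexp]
    exact hk
  · -- the powers of `δ` cancel because `-n/p + nr + n/q = 0`
    have hpow : δ ^ (-((n : ℝ) / p)) * δ ^ (n - ∑ i, s i) * δ ^ ((n : ℝ) / q) = 1 := by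
      rw [← Real.rpow_add hδ, ← Real.rpow_add hδ, hσ, div_eq_mul_one_div (n : ℝ) q, hq]
      rw [show -((n : ℝ) / p) + (n - n * (1 - r)) + n * (1 / p - r) = 0 by ring, Real.rpow_zero]
    congr 1
    linear_combination (C₂ * C₁ * κ) * hpow
end

section
/- (Lemma 2) Let $m, n \in \mathbb{N}$ with $1 < m \le n$, and let $n_1, \dots, n_m$ be natural numbers with $n_1 + \dots + n_m = n$. If $A_1, \dots, A_m$ are $n \times n$ singular real matrices such that $\bigoplus_{i=1}^m \bigcap_{1 \le j \ne i \le m} \mathcal{N}_j = \mathbb{R}^n$, where $\mathcal{N}_j = \{x : A_j x = 0\}$ and $\dim(\mathcal{N}_j) = n - n_j$, and $A_1 + \dots + A_m$ is invertible, then there exist two $n \times n$ invertible real matrices $B$ and $C$ such that for each $j = 1, \dots, m$, the matrix $B^{-1} A_j C$ is the canonical projection of $\mathbb{R}^n = \mathbb{R}^{n_1} \times \cdots \times \mathbb{R}^{n_m}$ onto $\{0\} \times \cdots \times \mathbb{R}^{n_j} \times \cdots \times \{0\}$. -/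
/-!
Put `E i = ⋂_{j ≠ i} 𝒩 j` and `S = ∑ A i`. On `E i` every `A j` with `j ≠ i` vanishes, so `S` agrees
with `A i` there; as `S` is injective, `E j ∩ 𝒩 j = 0`. Since `𝒩 j` contains all `E i` with
`i ≠ j`, this makes `E j` a complement of `𝒩 j`, whence `dim E j = n j`. Let the columns of `C` be a
basis adapted to `⨁ E i`, listed block by block, and let `B = S C`. A column `c` of `C` in block
`i` has `A j c = 0` for `j ≠ i` and `A i c = S c`, that is, `A j C = B P j` where `P j` is
the projection onto the `j`-th block.
-/

open Matrix

/-- The inverse of the lexicographic enumeration `finSigmaFinEquiv` finds the block containing a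
coordinate. -/
lemma fst_finSigmaFinEquiv_symm_eq_iff {m : ℕ} (ni : Fin m → ℕ) (k : Fin (∑ i, ni i)) (j : Fin m) :
    ((∑ i ∈ Finset.Iio j, ni i) ≤ (k : ℕ) ∧ (k : ℕ) < (∑ i ∈ Finset.Iio j, ni i) + ni j) ↔
      (finSigmaFinEquiv.symm k).1 = j := by
  obtain ⟨⟨a, b⟩, rfl⟩ := finSigmaFinEquiv.surjective k
  have hv : ((finSigmaFinEquiv ⟨a, b⟩ : Fin (∑ i, ni i)) : ℕ) =
      (∑ i ∈ Finset.Iio a, ni i) + b := by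
    rw [finSigmaFinEquiv_apply]
    congr 1
    refine Finset.sum_bij (fun i _ => Fin.castLE a.2.le i) ?_ ?_ ?_ ?_
    · intro i _
      simp [Fin.lt_def]
    · intro i _ i' _ h
      simpa using h
    · intro i hi
      exact ⟨⟨i, Fin.lt_def.1 (Finset.mem_Iio.1 hi)⟩, by simp, rfl⟩
    · intro i _
      rfl
  have hmono : ∀ {x y : Fin m}, x < y →
      (∑ i ∈ Finset.Iio x, ni i) + ni x ≤ ∑ i ∈ Finset.Iio y, ni i := by
    intro x y hxy
    rw [add_comm, ← Finset.sum_insert (by simp : x ∉ Finset.Iio x)]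
    refine Finset.sum_le_sum_of_subset fun z hz => ?_
    simp only [Finset.mem_insert, Finset.mem_Iio] at hz ⊢
    rcases hz with rfl | hz
    · exact hxy
    · exact hz.trans hxy
  have hb := b.2
  rw [hv, Equiv.symm_apply_apply]
  dsimp only
  constructor
  · rintro ⟨h1, h2⟩
    rcases lt_trichotomy a j with h | h | h
    · have := hmono h
      omega
    · exact h
    · have := hmono h
      omega
  · rintro rfl
    omega

/-- **Lemma 2.** If `A₁, …, A_m` are `n × n` singular real matrices whose
kernels `𝒩ⱼ` satisfy `dim 𝒩ⱼ = n - nⱼ` and `⨁ᵢ ⋂_{j ≠ i} 𝒩ⱼ = ℝⁿ`, and `A₁ + ⋯ + A_m`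
is invertible, then there are invertible matrices `B` and `C` such that `B⁻¹ Aⱼ C` is the
canonical projection of `ℝⁿ = ℝ^{n₁} × ⋯ × ℝ^{n_m}` onto the `j`-th factor (here the `j`-th
factor corresponds to the consecutive block of coordinates `∑_{i<j} nᵢ ≤ k < ∑_{i<j} nᵢ + nⱼ`). -/
theorem exists_invertible_conjugating_to_projections
    (n m : ℕ) (hm : 1 < m) (hmn : m ≤ n)
    (ni : Fin m → ℕ) (hni : ∀ i, 0 < ni i) (hsum : ∑ i, ni i = n)
    (A : Fin m → Matrix (Fin n) (Fin n) ℝ)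
    (hsing : ∀ i, ¬ IsUnit (A i))
    (hdim : ∀ j, Module.finrank ℝ
      (LinearMap.ker (Matrix.mulVecLin (A j))) = n - ni j)
    (hindep : iSupIndep fun i : Fin m =>
      ⨅ j ∈ ({i}ᶜ : Set (Fin m)), LinearMap.ker (Matrix.mulVecLin (A j)))
    (hspan : (⨆ i : Fin m,
      ⨅ j ∈ ({i}ᶜ : Set (Fin m)), LinearMap.ker (Matrix.mulVecLin (A j))) = ⊤)
    (hinv : IsUnit (∑ i, A i)) :
    ∃ B C : Matrix (Fin n) (Fin n) ℝ, IsUnit B ∧ IsUnit C ∧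
      ∀ j, B⁻¹ * A j * C = Matrix.diagonal (fun k : Fin n =>
        if (∑ i ∈ Finset.Iio j, ni i) ≤ (k : ℕ) ∧
            (k : ℕ) < (∑ i ∈ Finset.Iio j, ni i) + ni j then (1 : ℝ) else 0) := by
  subst hsum
  set E : Fin m → Submodule ℝ (Fin (∑ i, ni i) → ℝ) := fun i =>
    ⨅ j ∈ ({i}ᶜ : Set (Fin m)), LinearMap.ker (Matrix.mulVecLin (A j)) with hE
  have hEmem : ∀ {i j x}, x ∈ E i → j ≠ i → A j *ᵥ x = 0 := by
    intro i j x hx hji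
    simp only [hE, Submodule.mem_iInf] at hx
    simpa using hx j hji
  have hS : ∀ {i x}, x ∈ E i → (∑ l, A l) *ᵥ x = A i *ᵥ x := by
    intro i x hx
    rw [Matrix.sum_mulVec]
    exact Finset.sum_eq_single i (fun l _ hl => hEmem hx hl) (by simp)
  have hcompl : ∀ j, IsCompl (E j) (LinearMap.ker (Matrix.mulVecLin (A j))) := by
    intro j
    constructor
    · rw [Submodule.disjoint_def]
      intro x hx hxj
      have h0 : (∑ l, A l) *ᵥ x = (∑ l, A l) *ᵥ 0 := by
        rw [hS hx, Matrix.mulVec_zero]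
        simpa using hxj
      exact Matrix.mulVec_injective_of_isUnit hinv h0
    · rw [codisjoint_iff, eq_top_iff, ← hspan]
      refine iSup_le fun i => ?_
      by_cases hij : i = j
      · subst hij
        exact le_sup_left
      · refine le_sup_of_le_right fun x hx => ?_
        simpa using hEmem hx (Ne.symm hij)
  have hfin : ∀ j, Module.finrank ℝ (E j) = ni j := by
    intro j
    have h1 := Submodule.finrank_add_eq_of_isCompl (hcompl j)
    rw [hdim j, Module.finrank_fin_fun] at h1
    have h2 : ni j ≤ ∑ i, ni i := Finset.single_le_sum (fun _ _ => Nat.zero_le _) (Finset.mem_univ j)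
    omega
  have hint : DirectSum.IsInternal E :=
    DirectSum.isInternal_submodule_of_iSupIndep_of_iSup_eq_top hindep hspan
  -- A basis adapted to the decomposition, listed in the order in which the blocks are laid out.
  let c : Module.Basis (Fin (∑ i, ni i)) ℝ (Fin (∑ i, ni i) → ℝ) :=
    (hint.collectedBasis fun j => Module.finBasisOfFinrankEq ℝ (E j) (hfin j)).reindex
      finSigmaFinEquiv
  have hc : ∀ k, c k ∈ E (finSigmaFinEquiv.symm k).1 := by
    intro k
    simp only [c, Module.Basis.reindex_apply]
    exact hint.collectedBasis_mem _ _
  let C : Matrix (Fin (∑ i, ni i)) (Fin (∑ i, ni i)) ℝ := (Pi.basisFun ℝ _).toMatrix c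
  have hC : IsUnit C := by
    let := (Pi.basisFun ℝ (Fin (∑ i, ni i))).invertibleToMatrix c
    exact isUnit_of_invertible C
  have hmul : ∀ (M : Matrix (Fin (∑ i, ni i)) (Fin (∑ i, ni i)) ℝ) (i k),
      (M * C) i k = (M *ᵥ c k) i := fun _ _ _ => rfl
  have hB : IsUnit ((∑ i, A i) * C) := hinv.mul hC
  refine ⟨(∑ i, A i) * C, C, hB, hC, fun j => ?_⟩
  simp only [fst_finSigmaFinEquiv_symm_eq_iff]
  have key : A j * C = (∑ i, A i) * C *
      Matrix.diagonal (fun k => if (finSigmaFinEquiv.symm k).1 = j then (1 : ℝ) else 0) := by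
    ext i k
    rw [Matrix.mul_diagonal, hmul, hmul]
    split_ifs with h
    · rw [hS (hc k), h, mul_one]
    · rw [hEmem (hc k) (Ne.symm h), mul_zero, Pi.zero_apply]
  rw [mul_assoc, key, Matrix.nonsing_inv_mul_cancel_left _ _ ((Matrix.isUnit_iff_isUnit_det _).1 hB)]
end

section
/- Let $0 < \alpha < n$, $m > 1$, let $\alpha_1, \dots, \alpha_m$ be positive constants with $\alpha_1 + \dots + \alpha_m = n - \alpha$, and let $A_1, \dots, A_m$ be $n \times n$ invertible real matrices with $A_i \ne A_j$ for $i \ne j$. Then $T_{\alpha,m}$ is of weak type $(1, \frac{n}{n-\alpha})$: there exists $C > 0$ such that for every $f \in L^1(\mathbb{R}^n)$ and every $\lambda > 0$, $|\{x \in \mathbb{R}^n : |T_{\alpha,m} f(x)| > \lambda\}| \le \left( C \lambda^{-1} \|f\|_{L^1} \right)^{n/(n-\alpha)}$. -/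
open MeasureTheory Matrix

/-!
With `s = n - α`, the kernel of `T_{α,m}` is at most `∑ i, ‖x - A i y‖ ^ (-s)`, since all the norms
are at least the smallest one (`prod_rpow_le_sum`). It remains to treat this positive kernel
(`sum_riesz_weak_type`), by duality between weak `L^{n/s}` and averages over sets of finite measure.

Let `F` be a subset of finite measure `M` of the set where the positive operator applied to `|f|`
exceeds `λ`. By Tonelli, `λ M` is at most the integral over `y` of
`|f y| * ∑ i, ∫_F ‖x - A i y‖ ^ (-s) dx`. As `s < n`, each inner integral is at most
`K * M ^ (1 - s / n)` with `K` independent of `F` and `y` (`setLIntegral_riesz_le`).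
Hence `λ M ≤ m K M ^ (1 - s / n) ‖f‖₁`, that is, `M ≤ (m K ‖f‖₁ / λ) ^ (n / s)`.
Exhausting the superlevel set by such sets `F` gives the claim.
-/

/-- The Riesz kernel `‖x‖^(-s)`, `0 < s < n`, integrated over a set of measure at most `M` is
`O(M^(1 - s/n))`, uniformly over translations: split at the ball of radius `M^(1/n)`. -/
lemma setLIntegral_riesz_le (n : ℕ) (s : ℝ) (hs0 : 0 < s) (hsn : s < n) :
    ∃ K : ℝ, 0 < K ∧ ∀ (F : Set (EuclideanSpace ℝ (Fin n))) (M : ℝ), 0 < M →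
      volume F ≤ ENNReal.ofReal M → ∀ z : EuclideanSpace ℝ (Fin n),
      ∫⁻ x in F, ENNReal.ofReal (‖x - z‖ ^ (-s)) ≤ ENNReal.ofReal (K * M ^ (1 - s / n)) := by
  have hn0 : (0 : ℝ) < n := hs0.trans hsn
  have hn1 : 1 ≤ n := by
    have : 0 < n := by exact_mod_cast hn0
    omega
  set k : EuclideanSpace ℝ (Fin n) → ℝ := fun x => ‖x‖ ^ (-s) with hk
  have hkm : Measurable k := by fun_prop
  have hint : ∀ r : ℝ, IntegrableOn k (Metric.ball 0 r) volume := fun r =>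
    integrableOn_ball_of_norm_le_rpow (C := 1) (α := s) (by simpa using hn1) (by simpa using hsn)
      (Filter.Eventually.of_forall fun x => by
        simp only [hk, one_mul]
        rw [Real.norm_of_nonneg (by positivity)])
      hkm.aestronglyMeasurable
  set I : ℝ := ∫ x in Metric.ball (0 : EuclideanSpace ℝ (Fin n)) 1, k x with hI
  have hI0 : 0 ≤ I := integral_nonneg fun x => by simp only [hk]; positivity
  -- scaling: the integral over the ball of radius `r` is `r^(n-s)` times that over the unit ball
  have hscale : ∀ r : ℝ, 0 < r →
      ∫ x in Metric.ball (0 : EuclideanSpace ℝ (Fin n)) r, k x = r ^ ((n : ℝ) - s) * I := by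
    intro r hr
    have h := Measure.setIntegral_comp_smul_of_pos (volume : Measure (EuclideanSpace ℝ (Fin n)))
      k (Metric.ball 0 1) hr
    rw [smul_unitBall_of_pos hr] at h
    have h2 : ∀ x, k (r • x) = r ^ (-s) * k x := fun x => by
      simp only [hk, norm_smul, Real.norm_of_nonneg hr.le]
      rw [Real.mul_rpow hr.le (norm_nonneg _)]
    simp only [h2, integral_const_mul, finrank_euclideanSpace, Fintype.card_fin, smul_eq_mul] at h
    rw [Real.rpow_sub hr, Real.rpow_natCast]
    rw [Real.rpow_neg hr.le, ← hI] at h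
    have hrn : r ^ n ≠ 0 := by positivity
    field_simp at h ⊢
    linarith
  refine ⟨I + 1, by linarith, fun F M hM hF z => ?_⟩
  set r : ℝ := M ^ ((n : ℝ)⁻¹) with hr
  have hr0 : 0 < r := by positivity
  calc ∫⁻ x in F, ENNReal.ofReal (‖x - z‖ ^ (-s))
      ≤ ∫⁻ x in F, ((Metric.ball (0 : EuclideanSpace ℝ (Fin n)) r).indicator
          (fun x => ENNReal.ofReal (k x)) (x - z) + ENNReal.ofReal (r ^ (-s))) := by
        refine lintegral_mono fun x => ?_
        by_cases hx : x - z ∈ Metric.ball (0 : EuclideanSpace ℝ (Fin n)) r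
        · rw [Set.indicator_of_mem hx]
          exact le_self_add
        · rw [Set.indicator_of_notMem hx, zero_add]
          rw [mem_ball_zero_iff, not_lt] at hx
          exact ENNReal.ofReal_le_ofReal
            (Real.rpow_le_rpow_of_nonpos hr0 hx (by linarith))
    _ = (∫⁻ x in F, (Metric.ball (0 : EuclideanSpace ℝ (Fin n)) r).indicator
          (fun x => ENNReal.ofReal (k x)) (x - z)) + ENNReal.ofReal (r ^ (-s)) * volume F := by
        rw [lintegral_add_right _ measurable_const, setLIntegral_const]
    _ ≤ ENNReal.ofReal (r ^ ((n : ℝ) - s) * I)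
          + ENNReal.ofReal (r ^ (-s)) * ENNReal.ofReal M := by
        gcongr
        refine (setLIntegral_le_lintegral _ _).trans ?_
        rw [lintegral_sub_right_eq_self
          ((Metric.ball (0 : EuclideanSpace ℝ (Fin n)) r).indicator
            (fun x => ENNReal.ofReal (k x))) z,
          lintegral_indicator measurableSet_ball,
          ← ofReal_integral_eq_lintegral_ofReal (hint r)
            (Filter.Eventually.of_forall fun x => by simp only [hk, Pi.zero_apply]; positivity),
          hscale r hr0]
    _ = ENNReal.ofReal ((I + 1) * M ^ (1 - s / n)) := by
        rw [← ENNReal.ofReal_mul (by positivity), ← ENNReal.ofReal_add (by positivity)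
          (by positivity)]
        congr 1
        have e1 : r ^ ((n : ℝ) - s) = M ^ (1 - s / n) := by
          rw [hr, ← Real.rpow_mul hM.le]
          congr 1
          field_simp
        have e2 : r ^ (-s) * M = M ^ (1 - s / n) := by
          rw [hr, ← Real.rpow_mul hM.le]
          nth_rw 2 [← Real.rpow_one M]
          rw [← Real.rpow_add hM]
          congr 1
          field_simp
          ring
        rw [e1, e2]
        ring

/-- Replacing every `a i` by the smallest one only increases the product, so the product kernel is
dominated by the sum of the Riesz kernels based at the individual points. -/
lemma prod_rpow_le_sum {m : ℕ} (hm : 0 < m) (a αs : Fin m → ℝ) (ha : ∀ i, 0 ≤ a i)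
    (hαs : ∀ i, 0 < αs i) :
    ∏ i, a i ^ (-αs i) ≤ ∑ i, a i ^ (-∑ j, αs j) := by
  have : Nonempty (Fin m) := ⟨⟨0, hm⟩⟩
  obtain ⟨i₀, hi₀⟩ := Finite.exists_min a
  have hsum : a i₀ ^ (-∑ j, αs j) ≤ ∑ i, a i ^ (-∑ j, αs j) :=
    Finset.single_le_sum (f := fun i => a i ^ (-∑ j, αs j))
      (fun i _ => Real.rpow_nonneg (ha i) _) (Finset.mem_univ i₀)
  rcases (ha i₀).eq_or_lt with h0 | h0
  · -- here `0 ^ (-αs i₀) = 0` in Lean, so the product vanishes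
    rw [Finset.prod_eq_zero (Finset.mem_univ i₀)]
    · exact Finset.sum_nonneg fun i _ => Real.rpow_nonneg (ha i) _
    · rw [← h0, Real.zero_rpow (neg_ne_zero.2 (hαs i₀).ne')]
  · refine le_trans ?_ hsum
    rw [← Finset.sum_neg_distrib, Real.rpow_sum_of_pos h0]
    exact Finset.prod_le_prod (fun i _ => Real.rpow_nonneg (ha i) _) fun i _ =>
      Real.rpow_le_rpow_of_nonpos h0 (hi₀ i) (by linarith [hαs i])

/-- The weak-type bound `(1, n/s)` for the positive operator with kernel `∑ i, ‖x - L i y‖^(-s)`;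
the maps `L i` only need to be measurable because the kernel is integrated in `x` first. -/
lemma sum_riesz_weak_type (n m : ℕ) (hm : 0 < m) (s : ℝ) (hs0 : 0 < s) (hsn : s < n)
    (L : Fin m → EuclideanSpace ℝ (Fin n) → EuclideanSpace ℝ (Fin n))
    (hL : ∀ i, Measurable (L i)) :
    ∃ C : ℝ, 0 < C ∧ ∀ (h : EuclideanSpace ℝ (Fin n) → ENNReal) (N : ℝ), Measurable h → 0 ≤ N →
      ∫⁻ y, h y = ENNReal.ofReal N → ∀ lam : ℝ, 0 < lam →
      volume {x | ENNReal.ofReal lam < ∫⁻ y, (∑ i, ENNReal.ofReal (‖x - L i y‖ ^ (-s))) * h y}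
        ≤ ENNReal.ofReal ((C * lam⁻¹ * N) ^ ((n : ℝ) / s)) := by
  obtain ⟨K, hK, hKF⟩ := setLIntegral_riesz_le n s hs0 hsn
  have hn0 : (0 : ℝ) < n := hs0.trans hsn
  have hm0 : (0 : ℝ) < m := by exact_mod_cast hm
  refine ⟨m * K, by positivity, fun h N hh hN hhN lam hlam => ?_⟩
  set κ : EuclideanSpace ℝ (Fin n) → EuclideanSpace ℝ (Fin n) → ENNReal :=
    fun x y => (∑ i, ENNReal.ofReal (‖x - L i y‖ ^ (-s))) * h y with hκ
  have hκm : Measurable (Function.uncurry κ) := by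
    simp only [hκ, Function.uncurry_def]
    fun_prop
  set G := {x | ENNReal.ofReal lam < ∫⁻ y, κ x y} with hG
  have hGm : MeasurableSet G := measurableSet_lt measurable_const hκm.lintegral_prod_right
  -- it is enough to bound the finite-measure truncations of the superlevel set
  rw [← Measure.iSup_restrict_spanningSets (μ := volume) G]
  refine iSup_le fun j => ?_
  rw [Measure.restrict_apply hGm]
  set F := G ∩ spanningSets volume j with hF
  have hFm : MeasurableSet F := hGm.inter (measurableSet_spanningSets _ _)
  have hFtop : volume F ≠ ⊤ :=
    ((measure_mono Set.inter_subset_right).trans_lt (measure_spanningSets_lt_top _ _)).ne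
  set M := (volume F).toReal with hM
  have hFM : volume F = ENNReal.ofReal M := (ENNReal.ofReal_toReal hFtop).symm
  rw [hFM]
  apply ENNReal.ofReal_le_ofReal
  have hMnn : 0 ≤ M := ENNReal.toReal_nonneg
  clear_value M
  rcases hMnn.eq_or_lt with hM0 | hM0
  · rw [← hM0]; positivity
  have key : ENNReal.ofReal lam * ENNReal.ofReal M
      ≤ ENNReal.ofReal (m * (K * M ^ (1 - s / n))) * ENNReal.ofReal N := by
    calc ENNReal.ofReal lam * ENNReal.ofReal M
        = ∫⁻ _ in F, ENNReal.ofReal lam := by rw [setLIntegral_const, hFM]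
      _ ≤ ∫⁻ x in F, ∫⁻ y, κ x y := setLIntegral_mono' hFm fun x hx => le_of_lt hx.1
      _ = ∫⁻ y, ∫⁻ x in F, κ x y := lintegral_lintegral_swap hκm.aemeasurable
      _ ≤ ∫⁻ y, ENNReal.ofReal (m * (K * M ^ (1 - s / n))) * h y := by
          refine lintegral_mono fun y => ?_
          simp only [hκ]
          rw [lintegral_mul_const _ (by fun_prop), lintegral_finsetSum _ (fun i _ => by fun_prop)]
          gcongr
          calc _ ≤ ∑ _i : Fin m, ENNReal.ofReal (K * M ^ (1 - s / n)) :=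
                Finset.sum_le_sum fun i _ => hKF F M hM0 hFM.le (L i y)
            _ = _ := by
                rw [Finset.sum_const, Finset.card_univ, Fintype.card_fin, nsmul_eq_mul,
                  ENNReal.ofReal_mul hm0.le, ENNReal.ofReal_natCast]
      _ = _ := by rw [lintegral_const_mul _ hh, hhN]
  rw [← ENNReal.ofReal_mul hlam.le, ← ENNReal.ofReal_mul (by positivity),
    ENNReal.ofReal_le_ofReal_iff (by positivity)] at key
  have hpow : M ^ (s / n) ≤ m * K * lam⁻¹ * N := by
    have hsplit : M ^ (1 - s / n) * M ^ (s / n) = M := by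
      rw [← Real.rpow_add hM0]; simp
    have hp : 0 < M ^ (1 - s / n) := by positivity
    refine le_of_mul_le_mul_left ?_ (mul_pos hlam hp)
    calc lam * M ^ (1 - s / n) * M ^ (s / n) = lam * M := by rw [mul_assoc, hsplit]
      _ ≤ _ := key
      _ = _ := by field_simp
  calc M = (M ^ (s / n)) ^ ((n : ℝ) / s) := by
        rw [← Real.rpow_mul hM0.le, div_mul_div_cancel₀ hn0.ne', div_self hs0.ne', Real.rpow_one]
    _ ≤ _ := Real.rpow_le_rpow (by positivity) hpow (by positivity)

/-- For `0 < α < n`, `m > 1`, positive exponents with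
`α₁ + ⋯ + α_m = n - α` and invertible pairwise distinct matrices `Aᵢ`, the operator
`T_{α,m}` is of weak type `(1, n/(n-α))`:
`|{x : |T_{α,m} f (x)| > λ}| ≤ (C λ⁻¹ ‖f‖_{L¹})^{n/(n-α)}`. -/
theorem Talpha_weak_type
    (n m : ℕ) (hm : 1 < m)
    (α : ℝ) (hα0 : 0 < α) (hαn : α < n)
    (αs : Fin m → ℝ) (hαs : ∀ i, 0 < αs i) (hsum : ∑ i, αs i = n - α)
    (A : Fin m → Matrix (Fin n) (Fin n) ℝ)
    (hA : ∀ i, IsUnit (A i)) (hAne : ∀ i j, i ≠ j → A i ≠ A j) :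
    ∃ C > 0, ∀ f : EuclideanSpace ℝ (Fin n) → ℝ,
      Integrable f volume → ∀ lam : ℝ, 0 < lam →
      volume {x : EuclideanSpace ℝ (Fin n) |
          lam < |∫ y, (∏ i, ‖x - Matrix.toEuclideanLin (A i) y‖ ^ (-αs i)) * f y|}
        ≤ ENNReal.ofReal ((C * lam⁻¹ * ∫ y, |f y|) ^ ((n : ℝ) / ((n : ℝ) - α))) := by
  obtain ⟨C, hC, hw⟩ := sum_riesz_weak_type n m (by omega) (n - α) (by linarith) (by linarith)
    (fun i y => Matrix.toEuclideanLin (A i) y)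
    (fun i => (LinearMap.continuous_of_finiteDimensional _).measurable)
  refine ⟨C, hC, fun f hf lam hlam => ?_⟩
  set h : EuclideanSpace ℝ (Fin n) → ENNReal := fun y => ‖hf.1.mk f y‖ₑ with hh
  have hhm : Measurable h := hf.1.stronglyMeasurable_mk.measurable.enorm
  have hfh : (fun y => ‖f y‖ₑ) =ᵐ[volume] h := hf.1.ae_eq_mk.fun_comp _
  have hN : ∫⁻ y, h y = ENNReal.ofReal (∫ y, |f y|) := by
    rw [← lintegral_congr_ae hfh]
    exact (ofReal_integral_norm_eq_lintegral_enorm hf).symm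
  refine le_trans (measure_mono fun x hx => ?_)
    (hw h _ hhm (integral_nonneg fun y => abs_nonneg _) hN lam hlam)
  simp only [Set.mem_ofPred_eq] at hx ⊢
  calc ENNReal.ofReal lam
      < ‖∫ y, (∏ i, ‖x - Matrix.toEuclideanLin (A i) y‖ ^ (-αs i)) * f y‖ₑ := by
        rw [Real.enorm_eq_ofReal_abs]
        exact (ENNReal.ofReal_lt_ofReal_iff (hlam.trans hx)).2 hx
    _ ≤ ∫⁻ y, ‖(∏ i, ‖x - Matrix.toEuclideanLin (A i) y‖ ^ (-αs i)) * f y‖ₑ :=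
        enorm_integral_le_lintegral_enorm _
    _ ≤ _ := by
        refine lintegral_mono_ae (hfh.mono fun y hy => ?_)
        rw [enorm_mul, ← hy]
        gcongr
        rw [Real.enorm_of_nonneg (Finset.prod_nonneg fun i _ => by positivity),
          ← ENNReal.ofReal_sum_of_nonneg (fun i _ => by positivity), ← hsum]
        exact ENNReal.ofReal_le_ofReal
          (prod_rpow_le_sum (by omega) _ αs (fun i => norm_nonneg _) hαs)
end

section
/- Let $m, n \in \mathbb{N}$ with $1 < m \le n$, and let $\mathcal{N}_1, \dots, \mathcal{N}_m$ be linear subspaces of $\mathbb{R}^n$. If $\bigoplus_{i=1}^m \bigcap_{1 \le j \ne i \le m} \mathcal{N}_j = \mathbb{R}^n$ (i.e., the subspaces $V_i = \bigcap_{j \ne i} \mathcal{N}_j$ are independent and their sum is $\mathbb{R}^n$), then for every $k \in \{1, \dots, m\}$, $\bigoplus_{1 \le i \ne k \le m} \bigcap_{1 \le j \ne i \le m} \mathcal{N}_j = \mathcal{N}_k$, i.e., the subspaces $\{V_i\}_{i \ne k}$ are independent with sum equal to $\mathcal{N}_k$. -/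
/-!
Write `Vᵢ = ⋂_{j ≠ i} 𝒩ⱼ` and `S = ∑_{i ≠ k} Vᵢ`. Every `Vᵢ` with `i ≠ k` lies in `𝒩ₖ`, so `S ≤ 𝒩ₖ`,
and `S + Vₖ` is the whole space. Moreover `𝒩ₖ ∩ Vₖ` is the intersection of all the `𝒩ⱼ`, hence lies in
every `Vᵢ`; since there are at least two indices, independence forces it to be zero. By modularity of the
subspace lattice, `S ≤ 𝒩ₖ` with `𝒩ₖ ⊓ Vₖ = ⊥` and `S ⊔ Vₖ = ⊤` gives `S = 𝒩ₖ`.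
-/

/-- If the subspaces `Vᵢ = ⋂_{j ≠ i} 𝒩ⱼ` form a direct sum decomposition
`⨁ᵢ Vᵢ = ℝⁿ`, then for every `k` the subfamily `{Vᵢ}_{i ≠ k}` is independent with
`⨁_{i ≠ k} Vᵢ = 𝒩ₖ`. -/
theorem directSum_inter_eq_of_directSum
    (n m : ℕ) (hm : 1 < m) (hmn : m ≤ n)
    (N : Fin m → Submodule ℝ (Fin n → ℝ))
    (hindep : iSupIndep fun i : Fin m => ⨅ j ∈ ({i}ᶜ : Set (Fin m)), N j)
    (hspan : (⨆ i : Fin m, ⨅ j ∈ ({i}ᶜ : Set (Fin m)), N j) = ⊤) :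
    ∀ k : Fin m,
      (iSupIndep fun i : {i : Fin m // i ≠ k} =>
        ⨅ j ∈ ({(i : Fin m)}ᶜ : Set (Fin m)), N j) ∧
      (⨆ i : {i : Fin m // i ≠ k},
        ⨅ j ∈ ({(i : Fin m)}ᶜ : Set (Fin m)), N j) = N k := by
  intro k
  refine ⟨hindep.comp Subtype.val_injective, ?_⟩
  set V : Fin m → Submodule ℝ (Fin n → ℝ) := fun i => ⨅ j ∈ ({i}ᶜ : Set (Fin m)), N j with hV
  change (⨆ i : {i : Fin m // i ≠ k}, V i) = N k
  have hVN : ∀ i j, j ≠ i → V i ≤ N j := fun i j hji => iInf₂_le j hji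
  refine eq_of_le_of_inf_le_of_sup_le (z := V k)
    (iSup_le fun (i : {i : Fin m // i ≠ k}) => hVN i k (Ne.symm i.2)) ?_ ?_
  · have : Nontrivial (Fin m) := Fin.nontrivial_iff_two_le.mpr hm
    obtain ⟨l, hl⟩ := exists_ne k
    have hall : ∀ j, N k ⊓ V k ≤ N j := fun j => by
      by_cases hj : j = k
      · exact hj ▸ inf_le_left
      · exact inf_le_right.trans (hVN k j hj)
    have hbot : N k ⊓ V k ≤ ⊥ :=
      hindep.pairwiseDisjoint hl (le_iInf₂ fun j _ => hall j) inf_le_right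
    exact hbot.trans bot_le
  · refine le_top.trans (hspan.ge.trans (iSup_le fun i => ?_))
    by_cases hi : i = k
    · exact hi ▸ le_sup_right
    · exact (le_iSup (fun i : {i : Fin m // i ≠ k} => V i) ⟨i, hi⟩).trans le_sup_left
end

section
/- Let $m, n \in \mathbb{N}$ with $1 < m \le n$, let $n_1, \dots, n_m \in \mathbb{N}$ with $n_1 + \dots + n_m = n$, and let $A_1, \dots, A_m$ be $n \times n$ singular real matrices such that $\bigoplus_{i=1}^m \bigcap_{1 \le j \ne i \le m} \mathcal{N}_j = \mathbb{R}^n$, where $\mathcal{N}_j = \{x : A_j x = 0\}$ and $\dim(\mathcal{N}_j) = n - n_j$. Then for each $k = 1, \dots, m$: the image of $\bigcap_{1 \le j \ne k \le m} \mathcal{N}_j$ under $A_k$ equals the range $\mathcal{R}(A_k)$ of $A_k$, and $\dim\left(\bigcap_{1 \le j \ne k \le m} \mathcal{N}_j\right) = \dim(\mathcal{R}(A_k)) = n_k$. -/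
open Matrix

/-!
Write `W i = ⋂_{j ≠ i} ker Aⱼ`. For `i ≠ k` the subspace `W i` lies in `ker Aₖ`, so applying `Aₖ`
to `ℝⁿ = ⨆ᵢ W i` leaves only the image of `W k`: this is the range of `Aₖ`, which has dimension
`nₖ` by rank-nullity. Hence `nₖ ≤ dim (W k)` for every `k`; as the sum is direct,
`∑ dim (W k) = n = ∑ nₖ`, so all these inequalities are equalities.
-/

/-- Under the direct-sum hypothesis `⨁ᵢ ⋂_{j ≠ i} 𝒩ⱼ = ℝⁿ` with
`dim 𝒩ⱼ = n - nⱼ`, for each `k` the matrix `Aₖ` maps `⋂_{j ≠ k} 𝒩ⱼ` onto its range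
`𝓡(Aₖ)`, and `dim (⋂_{j ≠ k} 𝒩ⱼ) = dim 𝓡(Aₖ) = nₖ`. -/
theorem image_inter_ker_eq_range_and_finrank
    (n m : ℕ) (hm : 1 < m) (hmn : m ≤ n)
    (ni : Fin m → ℕ) (hni : ∀ i, 0 < ni i) (hsum : ∑ i, ni i = n)
    (A : Fin m → Matrix (Fin n) (Fin n) ℝ)
    (hsing : ∀ i, ¬ IsUnit (A i))
    (hdim : ∀ j, Module.finrank ℝ
      (LinearMap.ker (Matrix.mulVecLin (A j))) = n - ni j)
    (hindep : iSupIndep fun i : Fin m =>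
      ⨅ j ∈ ({i}ᶜ : Set (Fin m)), LinearMap.ker (Matrix.mulVecLin (A j)))
    (hspan : (⨆ i : Fin m,
      ⨅ j ∈ ({i}ᶜ : Set (Fin m)), LinearMap.ker (Matrix.mulVecLin (A j))) = ⊤) :
    ∀ k : Fin m,
      Submodule.map (Matrix.mulVecLin (A k))
          (⨅ j ∈ ({k}ᶜ : Set (Fin m)), LinearMap.ker (Matrix.mulVecLin (A j)))
        = LinearMap.range (Matrix.mulVecLin (A k)) ∧
      Module.finrank ℝ
          ↥(⨅ j ∈ ({k}ᶜ : Set (Fin m)), LinearMap.ker (Matrix.mulVecLin (A j))) = ni k ∧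
      Module.finrank ℝ (LinearMap.range (Matrix.mulVecLin (A k))) = ni k := by
  set W : Fin m → Submodule ℝ (Fin n → ℝ) := fun i =>
    ⨅ j ∈ ({i}ᶜ : Set (Fin m)), LinearMap.ker (Matrix.mulVecLin (A j)) with hW
  have hle : ∀ i k, i ≠ k → W i ≤ LinearMap.ker (Matrix.mulVecLin (A k)) := fun i k hik =>
    iInf₂_le k (by simpa using hik.symm)
  have hmap : ∀ k, Submodule.map (Matrix.mulVecLin (A k)) (W k)
      = LinearMap.range (Matrix.mulVecLin (A k)) := by
    intro k
    rw [LinearMap.range_eq_map, ← hspan, Submodule.map_iSup]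
    refine le_antisymm (le_iSup (fun i => Submodule.map (Matrix.mulVecLin (A k)) (W i)) k)
      (iSup_le fun i => ?_)
    rcases eq_or_ne i k with rfl | hik
    · exact le_rfl
    · exact (LinearMap.le_ker_iff_map.1 (hle i k hik)).trans_le bot_le
  have hrank : ∀ k, Module.finrank ℝ (LinearMap.range (Matrix.mulVecLin (A k))) = ni k := by
    intro k
    have h1 := LinearMap.finrank_range_add_finrank_ker (Matrix.mulVecLin (A k))
    -- `nₖ ≤ n` makes the truncated subtraction in `hdim` a genuine one.
    have h2 : ni k ≤ n := hsum ▸ Finset.single_le_sum (fun i _ => Nat.zero_le _) (Finset.mem_univ k)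
    rw [hdim k, Module.finrank_fin_fun] at h1
    omega
  have hge : ∀ k, ni k ≤ Module.finrank ℝ (W k) := by
    intro k
    rw [← hrank k, ← hmap k]
    exact Submodule.finrank_map_le _ _
  have htot : ∑ i, ni i = ∑ i, Module.finrank ℝ (W i) := by
    have hint : DirectSum.IsInternal W :=
      DirectSum.isInternal_submodule_of_iSupIndep_of_iSup_eq_top hindep hspan
    have e := (LinearEquiv.ofBijective (DirectSum.coeLinearMap W) hint).finrank_eq
    rw [Module.finrank_directSum, Module.finrank_fin_fun] at e
    rw [hsum, e]
  have heq := (Finset.sum_eq_sum_iff_of_le fun i _ => hge i).1 htot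
  exact fun k => ⟨hmap k, (heq k (Finset.mem_univ k)).symm, hrank k⟩
end

section
/- Under the stated hypotheses, set $k(x,y) = |x - A_1 y|^{-n_1+\alpha_1} \cdots |x - A_m y|^{-n_m+\alpha_m}$, let $N \ge 1$ be an integer, let $z \in \mathbb{R}^n$, $\delta > 0$, $D = \max_{1 \le i \le m} \max_{|y|=1} |A_i y|$, and for $x$ let $q_N(x, \cdot)$ denote the degree $N-1$ Taylor polynomial of $y \mapsto k(x,y)$ expanded around $z$. Then there is a constant $C$ (independent of $x, y, z, \delta$) such that: whenever $x$ satisfies $|x - A_i z| \ge 4 D \delta$ for all $i$ and $|x - A_k z| \le |x - A_i z|$ for all $i \ne k$ (for some index $k$), and $y \in B(z, \delta)$, one has $|k(x,y) - q_N(x,y)| \le C\, |y - z|^N\, |x - A_k z|^{-n(1-r) - N}$. -/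
open MeasureTheory Matrix
open scoped ContDiff

/-!
The estimate is Taylor's theorem on the segment from `z` to `y`, combined with the bound
`‖D^N k(x, ·)(w)‖ ≤ K ρ ^ (-n(1-r) - N)` for every `w` on the segment, where
`ρ = (3/4) ‖x - A_{k₀} z‖`.

On the segment, `‖A_i (w - z)‖ ≤ D δ ≤ ‖x - A_i z‖ / 4`, hence
`‖x - A_i w‖ ≥ (3/4) ‖x - A_i z‖ ≥ ρ > 0` for every `i`. (Here `D > 0`, because `∑ A_i` is invertible
and `n ≥ 2`.) The derivative bound follows from three facts: `‖·‖ ^ b` is homogeneous and smooth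
off the origin, so its `j`-th derivative at `u` is at most a constant times `‖u‖ ^ (b - j)`
(`norm_iteratedFDeriv_norm_rpow_le`); composition with `w ↦ x - A_i w` costs only a factor
`‖A_i‖ ^ j` (`norm_iteratedFDeriv_norm_sub_rpow_le`); and Leibniz' rule multiplies these bounds
(`norm_iteratedFDeriv_prod_norm_sub_rpow_le`). The exponents add up to `-n(1-r)` since
`∑ n_i = n` and `α_i = r n_i`.
-/

lemma contDiffAt_norm_rpow {V : Type*} [NormedAddCommGroup V] [InnerProductSpace ℝ V]
    (b : ℝ) (k : ℕ∞ω) {u : V} (hu : u ≠ 0) : ContDiffAt ℝ k (fun v : V => ‖v‖ ^ b) u :=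
  (contDiffAt_norm ℝ hu).rpow_const_of_ne (norm_ne_zero_iff.mpr hu)

/-- The function `‖·‖ ^ b` is positively homogeneous of degree `b`, so its `j`-th derivative is
positively homogeneous of degree `b - j`; the constant is the maximum of that derivative on the
unit sphere. -/
lemma norm_iteratedFDeriv_norm_rpow_le {V : Type*} [NormedAddCommGroup V] [InnerProductSpace ℝ V]
    [FiniteDimensional ℝ V] (b : ℝ) (j : ℕ) :
    ∃ K : ℝ, 0 ≤ K ∧ ∀ u : V, u ≠ 0 →
      ‖iteratedFDeriv ℝ j (fun v : V => ‖v‖ ^ b) u‖ ≤ K * ‖u‖ ^ (b - j) := by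
  set f : V → ℝ := fun v => ‖v‖ ^ b with hf
  have hcont : ContinuousOn (iteratedFDeriv ℝ j f) (Metric.sphere (0 : V) 1) := fun u hu =>
    ((contDiffAt_norm_rpow b (j : ℕ∞ω)
      (ne_zero_of_mem_unit_sphere ⟨u, hu⟩)).continuousAt_iteratedFDeriv le_rfl).continuousWithinAt
  obtain ⟨K, hK⟩ := (isCompact_sphere (0 : V) 1).exists_bound_of_continuousOn hcont
  refine ⟨max K 0, le_max_right _ _, fun u hu => ?_⟩
  have hc : 0 < ‖u‖ := norm_pos_iff.mpr hu
  set c := ‖u‖ with hcdef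
  set e : V := c⁻¹ • u with he
  have hce : c • e = u := smul_inv_smul₀ hc.ne' u
  have hnorm : ‖e‖ = 1 := by
    rw [he, norm_smul, norm_inv, Real.norm_of_nonneg hc.le, inv_mul_cancel₀ hc.ne']
  have he0 : e ≠ 0 := by
    rw [← norm_ne_zero_iff, hnorm]; exact one_ne_zero
  -- `j`-fold differentiation of `f ∘ (c • ·) = c ^ b • f` at the unit vector `e` compares the
  -- derivative at `u = c • e` with the one at `e`.
  let g : V ≃L[ℝ] V := ContinuousLinearEquiv.smulLeft (Units.mk0 c hc.ne')
  have hg : ∀ v, g v = c • v := fun v => rfl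
  have h1 := g.iteratedFDerivWithin_comp_right f uniqueDiffOn_univ (x := e) (Set.mem_univ _) j
  rw [Set.preimage_univ, iteratedFDerivWithin_univ, iteratedFDerivWithin_univ, hg, hce] at h1
  have hfg : f ∘ g = c ^ b • f := by
    funext v
    simp only [hf, Function.comp, hg, Pi.smul_apply, smul_eq_mul, norm_smul,
      Real.norm_of_nonneg hc.le]
    exact Real.mul_rpow hc.le (norm_nonneg _)
  rw [hfg, iteratedFDeriv_const_smul_apply (contDiffAt_norm_rpow b (j : ℕ∞ω) he0)] at h1
  have hKe : ‖iteratedFDeriv ℝ j f e‖ ≤ max K 0 :=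
    (hK e (by simpa using hnorm)).trans (le_max_left _ _)
  have hcb : 0 ≤ c ^ (b - j) := Real.rpow_nonneg hc.le _
  refine ContinuousMultilinearMap.opNorm_le_bound (by positivity) fun v => ?_
  have h2 := congrArg (fun T => T fun i => c⁻¹ • v i) h1
  simp only [ContinuousMultilinearMap.compContinuousLinearMap_apply,
    _root_.smul_apply, ContinuousLinearEquiv.coe_coe, hg,
    smul_inv_smul₀ hc.ne'] at h2
  rw [← h2, ContinuousMultilinearMap.map_smul_univ, Finset.prod_const, Finset.card_univ,
    Fintype.card_fin, norm_smul, norm_smul, norm_pow, norm_inv, Real.norm_of_nonneg hc.le,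
    Real.norm_of_nonneg (Real.rpow_nonneg hc.le _), Real.rpow_sub hc, Real.rpow_natCast]
  calc c ^ b * (c⁻¹ ^ j * ‖iteratedFDeriv ℝ j f e v‖)
      ≤ c ^ b * (c⁻¹ ^ j * (max K 0 * ∏ i, ‖v i‖)) := by
        gcongr
        exact (ContinuousMultilinearMap.le_opNorm _ _).trans (by gcongr)
    _ = max K 0 * (c ^ b / c ^ j) * ∏ i, ‖v i‖ := by
        rw [inv_pow]; ring

lemma norm_iteratedFDeriv_norm_sub_rpow_le {V : Type*} [NormedAddCommGroup V]
    [InnerProductSpace ℝ V] [FiniteDimensional ℝ V] (L : V →L[ℝ] V) (b : ℝ) (j : ℕ) :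
    ∃ K : ℝ, 0 ≤ K ∧ ∀ x w : V, x - L w ≠ 0 →
      ‖iteratedFDeriv ℝ j (fun w : V => ‖x - L w‖ ^ b) w‖ ≤ K * ‖x - L w‖ ^ (b - j) := by
  obtain ⟨K, hK0, hK⟩ := norm_iteratedFDeriv_norm_rpow_le (V := V) b j
  refine ⟨K * ‖L‖ ^ j, by positivity, fun x w hxw => ?_⟩
  set f : V → ℝ := fun v => ‖x + v‖ ^ b with hf
  have hcomp : (fun w : V => ‖x - L w‖ ^ b) = f ∘ (-L) := by
    funext w; simp [hf, sub_eq_add_neg]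
  set s : Set V := {v | x + v ≠ 0}
  have hs : IsOpen s := isOpen_ne_fun (by fun_prop) (by fun_prop)
  have hs' : IsOpen ((-L : V →L[ℝ] V) ⁻¹' s) := hs.preimage (-L : V →L[ℝ] V).continuous
  have hws : (-L : V →L[ℝ] V) w ∈ s := by
    simpa [s, sub_eq_add_neg] using hxw
  have hfs : ContDiffOn ℝ (j : ℕ∞ω) f s := fun v hv =>
    ((contDiffAt_norm_rpow b (j : ℕ∞ω) hv).comp v (by fun_prop :
      ContDiffAt ℝ (j : ℕ∞ω) (fun v => x + v) v)).contDiffWithinAt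
  have h1 := (-L : V →L[ℝ] V).iteratedFDerivWithin_comp_right hfs hs.uniqueDiffOn
    hs'.uniqueDiffOn hws (i := j) le_rfl
  rw [iteratedFDerivWithin_of_isOpen j hs' hws, iteratedFDerivWithin_of_isOpen j hs hws] at h1
  rw [hcomp, h1]
  have h2 : iteratedFDeriv ℝ j f ((-L : V →L[ℝ] V) w) =
      iteratedFDeriv ℝ j (fun v : V => ‖v‖ ^ b) (x - L w) := by
    have h3 := iteratedFDeriv_comp_add_left (𝕜 := ℝ) (f := fun v : V => ‖v‖ ^ b) j x
      ((-L : V →L[ℝ] V) w)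
    rw [h3]
    simp [sub_eq_add_neg]
  rw [h2]
  refine (ContinuousMultilinearMap.norm_compContinuousLinearMap_le _ _).trans ?_
  rw [Finset.prod_const, Finset.card_univ, Fintype.card_fin, norm_neg]
  calc _ ≤ (K * ‖x - L w‖ ^ (b - j)) * ‖L‖ ^ j := by gcongr; exact hK _ hxw
    _ = _ := by ring

/-- Leibniz' rule: each term of the `N`-th derivative distributes `N` differentiations among the
factors, so that the individual bounds `‖x - L i w‖ ^ (b i - j i)` with `∑ i, j i = N` multiply to
`ρ ^ (∑ i, b i - N)`. The exponents `b i - j i` must be nonpositive for `ρ` to replace the larger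
`‖x - L i w‖`. -/
lemma norm_iteratedFDeriv_prod_norm_sub_rpow_le {V ι : Type*} [NormedAddCommGroup V]
    [InnerProductSpace ℝ V] [FiniteDimensional ℝ V] [Fintype ι] (L : ι → V →L[ℝ] V)
    (b : ι → ℝ) (hb : ∀ i, b i ≤ 0) (N : ℕ) :
    ∃ K : ℝ, 0 ≤ K ∧ ∀ (x w : V) (ρ : ℝ), 0 < ρ → (∀ i, ρ ≤ ‖x - L i w‖) →
      ContDiffAt ℝ (N : ℕ∞ω) (fun w : V => ∏ i, ‖x - L i w‖ ^ b i) w ∧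
      ‖iteratedFDeriv ℝ N (fun w : V => ∏ i, ‖x - L i w‖ ^ b i) w‖ ≤
        K * ρ ^ (∑ i, b i - N) := by
  classical
  choose K hK0 hK using fun i j => norm_iteratedFDeriv_norm_sub_rpow_le (L i) (b i) j
  refine ⟨∑ p ∈ (Finset.univ : Finset ι).sym N, ((p : Multiset ι).countPerms : ℝ) *
    ∏ i, K i ((p : Multiset ι).count i), ?_, fun x w ρ hρ hw => ?_⟩
  · exact Finset.sum_nonneg fun p _ => mul_nonneg (by positivity)
      (Finset.prod_nonneg fun i _ => hK0 _ _)
  set s : Set V := ⋂ i, {w | x - L i w ≠ 0}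
  have hs : IsOpen s := isOpen_iInter_of_finite fun i =>
    isOpen_ne_fun (by fun_prop) (by fun_prop)
  have hws : w ∈ s := Set.mem_iInter.mpr fun i =>
    norm_pos_iff.mp (hρ.trans_le (hw i))
  have hcd : ∀ i ∈ (Finset.univ : Finset ι),
      ContDiffOn ℝ (N : ℕ∞ω) (fun w : V => ‖x - L i w‖ ^ b i) s := fun i _ v hv =>
    (((by fun_prop : ContDiffAt ℝ (N : ℕ∞ω) (fun v => x - L i v) v).norm ℝ
      (Set.mem_iInter.mp hv i)).rpow_const_of_ne
        (norm_ne_zero_iff.mpr (Set.mem_iInter.mp hv i))).contDiffWithinAt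
  refine ⟨(contDiffOn_prod hcd).contDiffAt (hs.mem_nhds hws), ?_⟩
  have h1 := norm_iteratedFDerivWithin_prod_le hcd hs.uniqueDiffOn hws (n := N) le_rfl
  simp only [iteratedFDerivWithin_of_isOpen _ hs hws] at h1
  refine h1.trans ?_
  rw [Finset.sum_mul]
  refine Finset.sum_le_sum fun p _ => ?_
  rw [mul_assoc]
  refine mul_le_mul_of_nonneg_left ?_ (by positivity)
  have hcount : (∑ i, b i - N : ℝ) = ∑ i, (b i - ((p : Multiset ι).count i : ℕ)) := by
    rw [Finset.sum_sub_distrib, ← Nat.cast_sum]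
    congr 2
    have := Multiset.sum_count_eq_card (s := Finset.univ) (m := (p : Multiset ι)) (by simp)
    rw [this]; exact p.2.symm
  rw [hcount, Real.rpow_sum_of_pos hρ, ← Finset.prod_mul_distrib]
  refine Finset.prod_le_prod (fun _ _ => norm_nonneg _) fun i _ => ?_
  refine (hK i _ x w (Set.mem_iInter.mp hws i)).trans ?_
  refine mul_le_mul_of_nonneg_left ?_ (hK0 _ _)
  refine Real.rpow_le_rpow_of_nonpos hρ (hw i) ?_
  have := hb i
  have h0 : (0 : ℝ) ≤ ((p : Multiset ι).count i : ℕ) := Nat.cast_nonneg _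
  linarith

lemma abs_sub_taylor_le {V : Type*} [NormedAddCommGroup V] [NormedSpace ℝ V]
    {f : V → ℝ} {z v : V} {N : ℕ} (hN : 1 ≤ N) {M : ℝ}
    (hf : ∀ t ∈ Set.Icc (0 : ℝ) 1, ContDiffAt ℝ (N : ℕ∞ω) f (z + t • v))
    (hM : ∀ t ∈ Set.Icc (0 : ℝ) 1, ‖iteratedFDeriv ℝ N f (z + t • v)‖ ≤ M) :
    |f (z + v) - ∑ j ∈ Finset.range N, ((Nat.factorial j : ℝ))⁻¹ •
      (iteratedFDeriv ℝ j f z) (fun _ => v)| ≤ M * ‖v‖ ^ N := by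
  obtain ⟨k, rfl⟩ : ∃ k, N = k + 1 := ⟨N - 1, by omega⟩
  rw [map_add_eq_sum_add_integral_iteratedFDeriv (f := f) (x := z) (y := v) (n := k)
    (by exact_mod_cast hf),
    add_sub_cancel_left, ← Real.norm_eq_abs, norm_smul]
  have hM0 : 0 ≤ M := (norm_nonneg _).trans (hM 0 (by simp))
  have hint : ‖∫ t in (0 : ℝ)..1, (1 - t) ^ k •
      iteratedFDeriv ℝ (k + 1) f (z + t • v) (fun _ => v)‖ ≤ M * ‖v‖ ^ (k + 1) * |1 - 0| := by
    refine intervalIntegral.norm_integral_le_of_norm_le_const fun t ht => ?_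
    rw [Set.uIoc_of_le zero_le_one] at ht
    have ht' : t ∈ Set.Icc (0 : ℝ) 1 := ⟨ht.1.le, ht.2⟩
    rw [norm_smul]
    have h1 : ‖(1 - t) ^ k‖ ≤ 1 := by
      rw [norm_pow, Real.norm_of_nonneg (by linarith [ht.2])]
      exact pow_le_one₀ (by linarith [ht.2]) (by linarith [ht.1])
    have h2 : ‖iteratedFDeriv ℝ (k + 1) f (z + t • v) (fun _ => v)‖ ≤ M * ‖v‖ ^ (k + 1) := by
      refine (ContinuousMultilinearMap.le_opNorm _ _).trans ?_
      rw [Finset.prod_const, Finset.card_univ, Fintype.card_fin]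
      gcongr
      exact hM t ht'
    calc _ ≤ 1 * (M * ‖v‖ ^ (k + 1)) := by gcongr
      _ = _ := one_mul _
  have hfac : ‖((Nat.factorial k : ℝ))⁻¹‖ ≤ 1 := by
    rw [norm_inv, Real.norm_of_nonneg (by positivity)]
    exact inv_le_one_of_one_le₀ (by exact_mod_cast Nat.factorial_pos k)
  calc _ ≤ 1 * (M * ‖v‖ ^ (k + 1) * |1 - 0|) := by gcongr
    _ = _ := by simp

/-- For the kernel `k(x,y) = ∏ᵢ |x - Aᵢ y|^{-nᵢ+αᵢ}` and its degree `N-1`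
Taylor polynomial `q_N(x,·)` in `y` around `z` (written via iterated Fréchet derivatives),
if `|x - Aᵢ z| ≥ 4Dδ` for all `i` and `|x - A_{k₀} z| ≤ |x - Aᵢ z|` for all `i ≠ k₀`, then
for `y ∈ B(z, δ)` one has
`|k(x,y) - q_N(x,y)| ≤ C |y - z|^N |x - A_{k₀} z|^{-n(1-r) - N}`,
with `C` independent of `x, y, z, δ`. -/
theorem kernel_taylor_remainder_estimate
    (n m : ℕ) (hm : 1 < m) (hmn : m ≤ n)
    (ni : Fin m → ℕ) (hni : ∀ i, 0 < ni i) (hsum : ∑ i, ni i = n)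
    (A : Fin m → Matrix (Fin n) (Fin n) ℝ)
    (hsing : ∀ i, ¬ IsUnit (A i))
    (hdim : ∀ j, Module.finrank ℝ
      (LinearMap.ker (Matrix.toEuclideanLin (A j))) = n - ni j)
    (hindep : iSupIndep fun i : Fin m =>
      ⨅ j ∈ ({i}ᶜ : Set (Fin m)), LinearMap.ker (Matrix.toEuclideanLin (A j)))
    (hspan : (⨆ i : Fin m,
      ⨅ j ∈ ({i}ᶜ : Set (Fin m)), LinearMap.ker (Matrix.toEuclideanLin (A j))) = ⊤)
    (hinv : IsUnit (∑ i, A i))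
    (r : ℝ) (hr0 : 0 < r) (hr1 : r < 1)
    (α : Fin m → ℝ) (hα : ∀ i, α i = r * ni i)
    (N : ℕ) (hN : 1 ≤ N)
    (D : ℝ)
    (hD : IsGreatest {t : ℝ | ∃ (i : Fin m) (y : EuclideanSpace ℝ (Fin n)),
      ‖y‖ = 1 ∧ t = ‖Matrix.toEuclideanLin (A i) y‖} D) :
    ∃ C : ℝ, ∀ (z : EuclideanSpace ℝ (Fin n)) (δ : ℝ), 0 < δ →
      ∀ (x : EuclideanSpace ℝ (Fin n)) (k₀ : Fin m),
      (∀ i, 4 * D * δ ≤ ‖x - Matrix.toEuclideanLin (A i) z‖) →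
      (∀ i, i ≠ k₀ →
        ‖x - Matrix.toEuclideanLin (A k₀) z‖ ≤ ‖x - Matrix.toEuclideanLin (A i) z‖) →
      ∀ y ∈ Metric.ball z δ,
      |(∏ i, ‖x - Matrix.toEuclideanLin (A i) y‖ ^ (-(ni i : ℝ) + α i)) -
          ∑ j ∈ Finset.range N, ((Nat.factorial j : ℝ))⁻¹ •
            (iteratedFDeriv ℝ j
              (fun w => ∏ i, ‖x - Matrix.toEuclideanLin (A i) w‖ ^ (-(ni i : ℝ) + α i)) z)
              (fun _ => y - z)|
        ≤ C * ‖y - z‖ ^ N *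
            ‖x - Matrix.toEuclideanLin (A k₀) z‖ ^ (-(n : ℝ) * (1 - r) - N) := by
  set L : Fin m → EuclideanSpace ℝ (Fin n) →L[ℝ] EuclideanSpace ℝ (Fin n) := fun i =>
    LinearMap.toContinuousLinearMap (Matrix.toEuclideanLin (A i)) with hLdef
  have hL : ∀ i v, Matrix.toEuclideanLin (A i) v = L i v := fun i v => rfl
  have hDmem : ∃ (i : Fin m) (y : EuclideanSpace ℝ (Fin n)), ‖y‖ = 1 ∧ D = ‖L i y‖ := hD.1
  have hDub : ∀ i v, ‖v‖ = 1 → ‖L i v‖ ≤ D := fun i v hv => hD.2 ⟨i, v, hv, rfl⟩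
  have hLD : ∀ i v, ‖L i v‖ ≤ D * ‖v‖ := by
    intro i v
    rcases eq_or_ne v 0 with rfl | hv
    · simp
    have hv' : 0 < ‖v‖ := norm_pos_iff.mpr hv
    have h := hDub i (‖v‖⁻¹ • v) (by
      rw [norm_smul, norm_inv, norm_norm, inv_mul_cancel₀ hv'.ne'])
    rw [map_smul, norm_smul, norm_inv, norm_norm, inv_mul_le_iff₀ hv'] at h
    linarith
  have hDpos : 0 < D := by
    obtain ⟨i₀, y₀, -, hDy⟩ := hDmem
    refine lt_of_le_of_ne (hDy ▸ norm_nonneg _) fun h0 => ?_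
    have hA0 : ∀ i, A i = 0 := by
      intro i
      apply (Matrix.toEuclideanLin (𝕜 := ℝ) (m := Fin n) (n := Fin n)).injective
      rw [map_zero]
      ext1 v
      have := hLD i v
      rw [← h0, zero_mul] at this
      exact norm_le_zero_iff.mp this
    have : Nonempty (Fin n) := ⟨⟨0, by omega⟩⟩
    simp [hA0] at hinv
  set b : Fin m → ℝ := fun i => -(ni i : ℝ) + α i with hb
  have hb0 : ∀ i, b i ≤ 0 := fun i => by
    have : (0 : ℝ) ≤ ni i := Nat.cast_nonneg _
    simp only [hb, hα]
    nlinarith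
  have hbsum : ∑ i, b i = -(n : ℝ) * (1 - r) := by
    simp only [hb, hα, Finset.sum_add_distrib, Finset.sum_neg_distrib, ← Finset.mul_sum]
    rw [← Nat.cast_sum, hsum]
    ring
  obtain ⟨K, hK0, hK⟩ := norm_iteratedFDeriv_prod_norm_sub_rpow_le L b hb0 N
  refine ⟨K * (3 / 4 : ℝ) ^ (-(n : ℝ) * (1 - r) - N), ?_⟩
  intro z δ hδ x k₀ hfar hmin y hy
  simp only [hL] at hfar hmin ⊢
  have hyz : ‖y - z‖ < δ := by rwa [Metric.mem_ball, dist_eq_norm] at hy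
  set R := ‖x - L k₀ z‖ with hR
  have hRpos : 0 < R := lt_of_lt_of_le (by positivity) (hfar k₀)
  have hseg : ∀ t ∈ Set.Icc (0 : ℝ) 1, ∀ i, 3 / 4 * R ≤ ‖x - L i (z + t • (y - z))‖ := by
    intro t ht i
    have hRi : R ≤ ‖x - L i z‖ := by
      by_cases h : i = k₀
      · rw [h]
      · exact hmin i h
    have h1 : ‖L i (t • (y - z))‖ ≤ D * δ := by
      refine (hLD i _).trans (mul_le_mul_of_nonneg_left ?_ hDpos.le)
      rw [norm_smul, Real.norm_of_nonneg ht.1]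
      nlinarith [ht.2, norm_nonneg (y - z)]
    have h2 : x - L i (z + t • (y - z)) = (x - L i z) - L i (t • (y - z)) := by
      rw [map_add]; abel
    have h3 := norm_sub_norm_le (x - L i z) (L i (t • (y - z)))
    rw [h2]
    linarith [hfar i]
  have hbound := fun t ht => hK x (z + t • (y - z)) (3 / 4 * R) (by positivity) (hseg t ht)
  have key := abs_sub_taylor_le (v := y - z) hN (fun t ht => (hbound t ht).1)
    (fun t ht => (hbound t ht).2)
  rw [add_sub_cancel] at key
  refine key.trans (le_of_eq ?_)
  rw [hbsum, Real.mul_rpow (by norm_num) hRpos.le]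
  ring
end
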